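/- arXiv:math/0306232 — 9 statements merged into one kernel-verified Lean document; each statement's English description precedes it below -/
import Mathlib

section
/- Let p ≥ 1 and q ≥ 1 be coprime integers, let r ≥ 0 be an integer, and let m ≥ 1. Then the element w_{p,q,r,m} of the free group F is primitive if and only if p = 1, or (m = 1 and r is congruent to 1, −1, q, or −q modulo p). -/
/-- The free group on two generators; `xx` and `yy` are the generators. -/
def xx : FreeGroup (Fin 2) := FreeGroup.of 0
def yy : FreeGroup (Fin 2) := FreeGroup.of 1

/-- The word `w_{p,q,r,m}` represented by the twisted torus knot
`T(p,q) + r T(m,n)` in the inside handlebody: writing `r = r̄ + α p`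
with `0 ≤ r̄ < p`, it is `∏_{j=0}^{p-1} x^{m e_j} y` where `e_j = α+1`
if `(j q mod p) < r̄` and `e_j = α` otherwise. -/
def w (p q r : ℕ) (m : ℤ) : FreeGroup (Fin 2) :=
  ((List.range p).map (fun j =>
    xx ^ (m * ((if j * q % p < r % p then r / p + 1 else r / p : ℕ) : ℤ)) * yy)).prod

/-- An element of the free group of rank two is primitive iff some automorphism
carries the generator `xx` to it. -/
def IsPrimitive (g : FreeGroup (Fin 2)) : Prop :=
  ∃ φ : FreeGroup (Fin 2) ≃* FreeGroup (Fin 2), φ xx = g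

/-- The one-relator group `G_{a,b} = ⟨x, y | x^a y^b⟩`. -/
abbrev Gg (a b : ℤ) : Type := PresentedGroup ({xx ^ a * yy ^ b} : Set (FreeGroup (Fin 2)))

/-- `g` is `(a,b)` Seifert-fibered if `F / ⟪g⟫ ≅ G_{a,b}`. -/
def IsSF (g : FreeGroup (Fin 2)) (a b : ℤ) : Prop :=
  Nonempty (PresentedGroup ({g} : Set (FreeGroup (Fin 2))) ≃* Gg a b)

/-!
For `m = 1` the word codes the orbit of `0` under the rotation `z ↦ z + q` of `ℤ/p`: the letters
`x ^ (α + 1) y` and `x ^ α y` form a basis, and the first one marks the visits to an interval of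
length `r̄ = r mod p`. If `r̄ = p - q mod p`, this is a Christoffel word, and the Christoffel words
of two Farey neighbours form a basis; `r̄ = q mod p` gives a conjugate of such a word with the
letters exchanged. If `r̄` is `1` or `p - 1`, one letter occurs only once.

Conversely, a group homomorphism that kills a primitive element has abelian image. Let the free
group act on `ℤ[X] / D` by affine maps whose linear parts are powers of `X`, where `D` is the Fox
derivative of the word: the word acts trivially, so the generators commute, and this says
`D ∣ X ^ p - 1`. Since `D(1) = p ≠ 0`, it follows that `deg D < p`, which confines the lattice path
of the word to the narrowest possible strip and makes the word balanced. So the exponents take two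
consecutive values, both divisible by `m`, and for `m = 1` two orbit codings coincide: an affine
bijection of `ℤ/p` preserves an interval of length `r̄`. If `2 ≤ r̄ ≤ p - 2`, it must have slope
`±1`, and then `r ≡ ±q`.
-/

section Basis

/-- The automorphism fixing `xx` and sending `yy` to `xx ^ k * yy * xx ^ l`; new bases are obtained
from old ones by composing with it. -/
def transvection (k l : ℤ) : FreeGroup (Fin 2) ≃* FreeGroup (Fin 2) :=
  MonoidHom.toMulEquiv
    (FreeGroup.lift ![xx, xx ^ k * yy * xx ^ l])
    (FreeGroup.lift ![xx, xx ^ (-k) * yy * xx ^ (-l)])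
    (by ext i; fin_cases i <;> simp [xx, yy, mul_assoc])
    (by ext i; fin_cases i <;> simp [xx, yy, mul_assoc])

/-- `A` and `B` form a basis of the free group of rank two. -/
def IsBasisPair (A B : FreeGroup (Fin 2)) : Prop :=
  ∃ φ : FreeGroup (Fin 2) ≃* FreeGroup (Fin 2), φ xx = A ∧ φ yy = B

namespace IsBasisPair

variable {A B : FreeGroup (Fin 2)}

lemma generators : IsBasisPair xx yy := ⟨MulEquiv.refl _, rfl, rfl⟩

lemma isPrimitive_left (h : IsBasisPair A B) : IsPrimitive A :=
  let ⟨φ, hφ, _⟩ := h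
  ⟨φ, hφ⟩

lemma symm (h : IsBasisPair A B) : IsBasisPair B A := by
  obtain ⟨φ, rfl, rfl⟩ := h
  refine ⟨(FreeGroup.freeGroupCongr (Equiv.swap 0 1)).trans φ, ?_, ?_⟩ <;> simp [xx, yy]

lemma isPrimitive_right (h : IsBasisPair A B) : IsPrimitive B := h.symm.isPrimitive_left

lemma zpow_mul_mul_zpow (h : IsBasisPair A B) (k l : ℤ) :
    IsBasisPair A (A ^ k * B * A ^ l) := by
  obtain ⟨φ, rfl, rfl⟩ := h
  refine ⟨(transvection k l).trans φ, ?_, ?_⟩ <;> simp [transvection, xx, yy]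

lemma zpow_mul (h : IsBasisPair A B) (k : ℤ) : IsBasisPair A (A ^ k * B) := by
  simpa using h.zpow_mul_mul_zpow k 0

lemma mul_right (h : IsBasisPair A B) : IsBasisPair A (A * B) := by
  simpa using h.zpow_mul 1

lemma mul_left (h : IsBasisPair A B) : IsBasisPair (A * B) B := by
  simpa using (h.symm.zpow_mul_mul_zpow 0 1).symm

end IsBasisPair

lemma IsPrimitive.map {g : FreeGroup (Fin 2)} (hg : IsPrimitive g)
    (ψ : FreeGroup (Fin 2) ≃* FreeGroup (Fin 2)) : IsPrimitive (ψ g) := by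
  obtain ⟨φ, rfl⟩ := hg
  exact ⟨φ.trans ψ, rfl⟩

end Basis

section Residues

variable {p q : ℕ}

lemma bijOn_mul_mod (hpq : p.Coprime q) (hp : 0 < p) :
    Set.BijOn (fun j => j * q % p) (Finset.range p) (Finset.range p) := by
  have hmaps : Set.MapsTo (fun j => j * q % p) (Finset.range p) (Finset.range p) := fun j _ => by
    simpa using Nat.mod_lt _ hp
  have hinj : Set.InjOn (fun j => j * q % p) (Finset.range p) := fun i hi j hj hij =>
    (Nat.ModEq.cancel_right_of_coprime hpq hij).eq_of_lt_of_lt (by simpa using hi)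
      (by simpa using hj)
  exact ⟨hmaps, hinj, Finset.surjOn_of_injOn_of_card_le _ hmaps hinj le_rfl⟩

lemma sum_range_mul_mod {M : Type*} [AddCommMonoid M] (hpq : p.Coprime q) (f : ℕ → M) :
    ∑ j ∈ Finset.range p, f (j * q % p) = ∑ i ∈ Finset.range p, f i := by
  rcases Nat.eq_zero_or_pos p with rfl | hp
  · rfl
  obtain ⟨hmaps, hinj, hsurj⟩ := bijOn_mul_mod hpq hp
  exact Finset.sum_nbij (fun j => j * q % p) hmaps hinj hsurj fun _ _ => rfl

lemma exists_forall_mul_mod_eq_iff (hpq : p.Coprime q) {t : ℕ} (ht : t < p) :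
    ∃ i < p, ∀ j < p, j * q % p = t ↔ j = i := by
  obtain ⟨-, hinj, hsurj⟩ := bijOn_mul_mod hpq (Nat.zero_lt_of_lt ht)
  obtain ⟨i, hi, rfl⟩ := hsurj (Finset.mem_coe.2 (Finset.mem_range.2 ht))
  exact ⟨i, by simpa using hi, fun j hj => hinj.eq_iff (by simpa using hj) hi⟩

lemma mod_eq_sub_mod_of_intModEq_neg {r c : ℕ} (hp : 0 < p) (hc : c % p ≠ 0)
    (h : (r : ℤ) ≡ -(c : ℤ) [ZMOD (p : ℤ)]) : r % p = p - c % p := by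
  have hdvd : p ∣ r + c := by
    have := h.symm.dvd
    rw [sub_neg_eq_add] at this
    exact_mod_cast this
  have hr := Nat.mod_lt r hp
  have hcp := Nat.mod_lt c hp
  rw [Nat.dvd_iff_mod_eq_zero, Nat.add_mod_eq_ite] at hdvd
  split_ifs at hdvd <;> omega

lemma exists_mul_eq_mul_add_one {a b : ℕ} (hab : a.Coprime b) (hb : 0 < b) :
    ∃ c d, c * b = a * d + 1 := by
  rcases Nat.lt_or_ge 1 a with ha | ha
  · obtain ⟨c, -, hc⟩ := Nat.exists_mul_mod_eq_one_of_coprime hab.symm ha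
    exact ⟨c, b * c / a, by rw [mul_comm, ← hc, Nat.div_add_mod]⟩
  · interval_cases a
    · exact ⟨1, 0, by simpa using hab⟩
    · exact ⟨1, b - 1, by omega⟩

end Residues

/-- The coding `∏_{j<p} (A or B)` of the rotation `z ↦ z + q` of `ℤ/p` with respect to the interval
`[0, ρ)`: the letter is `A` when the orbit of `0` is in the interval. With `p = a + b`, `q = a` and
`ρ = b`, it is the Christoffel word with `b` letters `A` and `a` letters `B`. -/
def rotationWord {M : Type*} [Monoid M] (A B : M) (p q ρ : ℕ) : M :=
  ((List.range p).map fun j => if j * q % p < ρ then A else B).prod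

section RotationWord

section Monoid

variable {M : Type*} [Monoid M] (A B : M)

lemma rotationWord_mod (p q ρ : ℕ) : rotationWord A B p (q % p) ρ = rotationWord A B p q ρ := by
  simp only [rotationWord, Nat.mul_mod_mod]

lemma prod_map_range_ite_eq {i n : ℕ} (hi : i < n) :
    ((List.range n).map fun j => if j = i then B else A).prod = A ^ i * B * A ^ (n - 1 - i) := by
  obtain ⟨k, rfl⟩ := Nat.exists_eq_add_of_lt hi
  have hlow : (List.range i).map (fun j => if j = i then B else A) = List.replicate i A := by
    rw [List.eq_replicate_iff]
    simp +contextual [Nat.ne_of_lt]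
  rw [show i + k + 1 - 1 - i = k by omega, show i + k + 1 = i + 1 + k by omega, List.range_add,
    List.range_succ]
  simp [hlow, Function.comp_def, add_assoc i 1, mul_assoc]

end Monoid

section Farey

-- The remainders `s' = x' % N` and `s = x % n` satisfy `n s' = N s + e`: divide the hypothesis `hx`
-- by `n N`.
lemma mod_lt_iff_of_mul_eq {n N x x' e ρ ρ' : ℕ} (hn : 0 < n) (he : e < N)
    (hx : n * x' = N * x + e) (hle : n * ρ' ≤ N * ρ + e) (hlt : N * ρ + e < n * ρ' + N) :
    x' % N < ρ' ↔ x % n < ρ := by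
  have hs : x % n < n := Nat.mod_lt x hn
  have hxs : n * x' = n * (N * (x / n)) + (N * (x % n) + e) := by
    calc n * x' = N * (n * (x / n) + x % n) + e := by rw [hx, Nat.div_add_mod]
      _ = n * (N * (x / n)) + (N * (x % n) + e) := by ring
  obtain ⟨s', rfl⟩ : ∃ s', x' = N * (x / n) + s' :=
    Nat.exists_eq_add_of_le (Nat.le_of_mul_le_mul_left (hxs ▸ Nat.le_add_right _ _) hn)
  have hrem : n * s' = N * (x % n) + e := by linarith
  generalize x % n = s at *
  have hs' : s' < N := by nlinarith
  rw [Nat.mul_add_mod, Nat.mod_eq_of_lt hs']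
  constructor <;> intro h <;> nlinarith

variable {a b c d : ℕ}

lemma mul_add_mod_lt_iff_left (h : c * b = a * d + 1) {j : ℕ} (hj : j < a + b) :
    j * (a + c) % (a + c + (b + d)) < b + d ↔ j * a % (a + b) < b := by
  have hc : 0 < c := Nat.pos_of_mul_pos_right (by omega : 0 < c * b)
  refine mod_lt_iff_of_mul_eq (e := j) (by omega) (by omega) ?_ ?_ ?_
  · linear_combination j * h
  · nlinarith
  · nlinarith

lemma mul_add_mod_lt_iff_right (h : c * b = a * d + 1) {i : ℕ} (hi : i < c + d) :
    (a + b + i) * (a + c) % (a + c + (b + d)) < b + d ↔ i * c % (c + d) < d := by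
  have hb : 0 < b := Nat.pos_of_mul_pos_left (by omega : 0 < c * b)
  obtain ⟨e, he⟩ := Nat.exists_eq_add_of_lt hi
  rw [← Nat.mul_add_mod (c + d) a (i * c)]
  refine mod_lt_iff_of_mul_eq (e := e + 1) (by omega) (by omega) ?_ ?_ ?_
  · zify at *
    linear_combination (c + d - i) * h + he
  · nlinarith
  · nlinarith

lemma rotationWord_add {M : Type*} [Monoid M] (A B : M) (h : c * b = a * d + 1) :
    rotationWord A B (a + c + (b + d)) (a + c) (b + d) =
      rotationWord A B (a + b) a b * rotationWord A B (c + d) c d := by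
  simp only [rotationWord]
  rw [show List.range (a + c + (b + d)) = List.range (a + b + (c + d)) by congr 1; omega,
    List.range_add, List.map_append, List.prod_append, List.map_map]
  congr 2 <;> refine List.map_congr_left fun j hj => ?_
  · exact if_congr (mul_add_mod_lt_iff_left h (List.mem_range.1 hj)) rfl rfl
  · exact if_congr (mul_add_mod_lt_iff_right h (List.mem_range.1 hj)) rfl rfl

end Farey

variable {A B : FreeGroup (Fin 2)}

-- Descent in the Stern–Brocot tree: one of the two neighbours is the mediant of the other and a
-- simpler one.
theorem isBasisPair_rotationWord (hAB : IsBasisPair A B) {a b c d : ℕ} (h : c * b = a * d + 1) :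
    IsBasisPair (rotationWord A B (a + b) a b) (rotationWord A B (c + d) c d) := by
  induction hN : a + b + c + d using Nat.strong_induction_on generalizing a b c d with
  | _ N ih =>
  have hc : 0 < c := Nat.pos_of_mul_pos_right (by omega : 0 < c * b)
  have hb : 0 < b := Nat.pos_of_mul_pos_left (by omega : 0 < c * b)
  have htrichotomy : (a = 0 ∧ d = 0) ∨ (a ≤ c ∧ b ≤ d) ∨ (c ≤ a ∧ d ≤ b) := by
    rcases le_or_gt c a with hca | hac
    · exact .inr (.inr ⟨hca, by nlinarith⟩)
    · rcases le_or_gt b d with hbd | hdb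
      · exact .inr (.inl ⟨hac.le, hbd⟩)
      · exact .inl (by constructor <;> nlinarith)
  rcases htrichotomy with ⟨rfl, rfl⟩ | ⟨hac, hbd⟩ | ⟨hca, hdb⟩
  · obtain ⟨rfl, rfl⟩ : c = 1 ∧ b = 1 := by simpa using h
    simpa [rotationWord] using hAB
  · obtain ⟨c, rfl⟩ := Nat.exists_eq_add_of_le hac
    obtain ⟨d, rfl⟩ := Nat.exists_eq_add_of_le hbd
    have h' : c * b = a * d + 1 := by linarith
    rw [rotationWord_add _ _ h']
    exact (ih _ (by omega) h' rfl).mul_right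
  · obtain ⟨a, rfl⟩ := Nat.exists_eq_add_of_le' hca
    obtain ⟨b, rfl⟩ := Nat.exists_eq_add_of_le' hdb
    have h' : c * b = a * d + 1 := by linarith
    rw [rotationWord_add _ _ h']
    exact (ih _ (by omega) h' rfl).mul_left

theorem isPrimitive_rotationWord_sub_mod (hAB : IsBasisPair A B) {p q : ℕ} (hp : 0 < p)
    (hpq : p.Coprime q) : IsPrimitive (rotationWord A B p q (p - q % p)) := by
  have hlt := Nat.mod_lt q hp
  have hco : (q % p).Coprime (p - q % p) := by
    rwa [Nat.coprime_sub_self_right hlt.le, Nat.Coprime, ← Nat.gcd_rec]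
  obtain ⟨c, d, h⟩ := exists_mul_eq_mul_add_one hco (by omega)
  have := (isBasisPair_rotationWord hAB h).isPrimitive_left
  rwa [Nat.add_sub_cancel' hlt.le, rotationWord_mod] at this

lemma prod_map_range_eq_conj {G : Type*} [Group G] {f : ℕ → G} {p : ℕ} (hf : f p = f 0) :
    ((List.range p).map f).prod =
      f 0 * ((List.range p).map fun j => f (j + 1)).prod * (f 0)⁻¹ := by
  rw [eq_mul_inv_iff_mul_eq, ← List.prod_range_succ' f, List.prod_range_succ, hf]

theorem isPrimitive_rotationWord_mod (hAB : IsBasisPair A B) {p q : ℕ} (hp : 0 < p)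
    (hpq : p.Coprime q) : IsPrimitive (rotationWord A B p q (q % p)) := by
  have hcomplement (j : ℕ) : (j + 1) * q % p < q % p ↔ ¬ j * q % p < p - q % p := by
    have hq := Nat.mod_lt q hp
    have hj := Nat.mod_lt (j * q) hp
    rw [add_mul, one_mul, Nat.add_mod_eq_ite]
    split_ifs <;> omega
  rw [rotationWord, prod_map_range_eq_conj (by simp)]
  refine IsPrimitive.map ?_ (MulAut.conj _)
  have := isPrimitive_rotationWord_sub_mod hAB.symm hp hpq
  simpa only [rotationWord, hcomplement, ite_not] using this

lemma isPrimitive_prod_map_range_ite_eq (hAB : IsBasisPair A B) {i n : ℕ} (hi : i < n) :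
    IsPrimitive ((List.range n).map fun j => if j = i then B else A).prod := by
  rw [prod_map_range_ite_eq A B hi]
  exact_mod_cast (hAB.zpow_mul_mul_zpow i (n - 1 - i : ℕ)).isPrimitive_right

theorem isPrimitive_rotationWord_one (hAB : IsBasisPair A B) {p q : ℕ} (hp : 0 < p)
    (hpq : p.Coprime q) : IsPrimitive (rotationWord A B p q 1) := by
  obtain ⟨i, hi, hiff⟩ := exists_forall_mul_mod_eq_iff hpq hp
  convert isPrimitive_prod_map_range_ite_eq hAB.symm hi using 1
  refine congrArg List.prod (List.map_congr_left fun j hj => ?_)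
  simp only [Nat.lt_one_iff, hiff j (List.mem_range.1 hj)]

theorem isPrimitive_rotationWord_sub_one (hAB : IsBasisPair A B) {p q : ℕ} (hp : 0 < p)
    (hpq : p.Coprime q) : IsPrimitive (rotationWord A B p q (p - 1)) := by
  obtain ⟨i, hi, hiff⟩ := exists_forall_mul_mod_eq_iff hpq (Nat.sub_one_lt_of_lt hp)
  convert isPrimitive_prod_map_range_ite_eq hAB hi using 1
  refine congrArg List.prod (List.map_congr_left fun j hj => ?_)
  have hlt : j * q % p < p - 1 ↔ ¬ j * q % p = p - 1 := by
    have := Nat.mod_lt (j * q) hp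
    omega
  simp only [hlt, hiff j (List.mem_range.1 hj), ite_not]

end RotationWord

section PositiveWord

/-- The word `∏_{j<n} x ^ (c j) y`. It is positive in `y` only: the exponents `c j` are arbitrary
integers. -/
def positiveWord (c : ℕ → ℤ) (n : ℕ) : FreeGroup (Fin 2) :=
  ((List.range n).map fun j => xx ^ c j * yy).prod

lemma positiveWord_zero (c : ℕ → ℤ) : positiveWord c 0 = 1 := rfl

lemma positiveWord_succ (c : ℕ → ℤ) (n : ℕ) :
    positiveWord c (n + 1) = positiveWord c n * (xx ^ c n * yy) :=
  List.prod_range_succ _ _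

lemma map_positiveWord {G : Type*} [CommGroup G] (ρ : FreeGroup (Fin 2) →* G) (c : ℕ → ℤ)
    (n : ℕ) : ρ (positiveWord c n) = ρ xx ^ (∑ i ∈ Finset.range n, c i) * ρ yy ^ n := by
  induction n with
  | zero => simp [positiveWord_zero]
  | succ n ih =>
    rw [positiveWord_succ, map_mul, map_mul, map_zpow, ih, Finset.sum_range_succ, zpow_add,
      pow_succ, mul_mul_mul_comm]

theorem IsPrimitive.isCoprime_sum {c : ℕ → ℤ} {p : ℕ} (h : IsPrimitive (positiveWord c p)) :
    IsCoprime (∑ i ∈ Finset.range p, c i) (p : ℤ) := by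
  obtain ⟨φ, hφ⟩ := h
  let ρ : FreeGroup (Fin 2) →* Multiplicative ℤ :=
    (FreeGroup.lift ![Multiplicative.ofAdd 1, 1]).comp φ.symm.toMonoidHom
  have hone : ρ (positiveWord c p) = Multiplicative.ofAdd 1 := by simp [ρ, ← hφ, xx]
  rw [map_positiveWord] at hone
  refine ⟨(ρ xx).toAdd, (ρ yy).toAdd, ?_⟩
  simpa [mul_comm] using congrArg Multiplicative.toAdd hone

/-- The height above the line through the endpoints, after `k` blocks, of the lattice path
described by `positiveWord c p`, scaled by `p` so that it is an integer. -/
def pathHeight (c : ℕ → ℤ) (p k : ℕ) : ℤ :=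
  p * ∑ i ∈ Finset.range k, c i - (∑ i ∈ Finset.range p, c i) * k

lemma pathHeight_zero (c : ℕ → ℤ) (p : ℕ) : pathHeight c p 0 = 0 := by simp [pathHeight]

lemma pathHeight_self (c : ℕ → ℤ) (p : ℕ) : pathHeight c p p = 0 := by
  rw [pathHeight, mul_comm, sub_self]

lemma pathHeight_succ (c : ℕ → ℤ) (p k : ℕ) :
    pathHeight c p (k + 1) = pathHeight c p k + (p * c k - ∑ i ∈ Finset.range p, c i) := by
  simp only [pathHeight, Finset.sum_range_succ]
  push_cast
  ring

lemma pathHeight_modEq (c : ℕ → ℤ) (p k : ℕ) :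
    pathHeight c p k ≡ -(k * ∑ i ∈ Finset.range p, c i) [ZMOD p] :=
  Int.modEq_iff_dvd.2 ⟨-∑ i ∈ Finset.range k, c i, by rw [pathHeight]; ring⟩

lemma injOn_pathHeight {c : ℕ → ℤ} {p : ℕ}
    (h : IsCoprime (∑ i ∈ Finset.range p, c i) (p : ℤ)) :
    Set.InjOn (pathHeight c p) (Finset.range p) := by
  intro i hi j hj hij
  have hmod := (pathHeight_modEq c p i).symm.trans (hij ▸ pathHeight_modEq c p j)
  have hdvd : (p : ℤ) ∣ (∑ i ∈ Finset.range p, c i) * ((i : ℤ) - j) := by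
    convert hmod.dvd using 1
    ring
  simp only [Finset.coe_range, Set.mem_Iio] at hi hj
  have := Int.eq_zero_of_abs_lt_dvd (h.symm.dvd_of_dvd_mul_left hdvd) (by rw [abs_lt]; omega)
  omega

end PositiveWord

section AffineAction

lemma IsPrimitive.commute_of_map_eq_one {g : FreeGroup (Fin 2)} (hg : IsPrimitive g)
    {G : Type*} [Group G] (ρ : FreeGroup (Fin 2) →* G) (hρ : ρ g = 1) (a b : FreeGroup (Fin 2)) :
    Commute (ρ a) (ρ b) := by
  obtain ⟨φ, rfl⟩ := hg
  have hmem (c : FreeGroup (Fin 2)) : ρ (φ c) ∈ Subgroup.zpowers (ρ (φ yy)) := by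
    induction c using FreeGroup.induction_on with
    | C1 => simp
    | of i =>
      fin_cases i
      · exact hρ ▸ Subgroup.one_mem _
      · exact Subgroup.mem_zpowers _
    | inv_of i hi => simpa using hi
    | mul c d hc hd => simpa using Subgroup.mul_mem _ hc hd
  obtain ⟨i, hi⟩ := hmem (φ.symm a)
  obtain ⟨j, hj⟩ := hmem (φ.symm b)
  rw [φ.apply_symm_apply] at hi hj
  rw [← hi, ← hj]
  exact (Commute.refl _).zpow_zpow i j

/-- The affine action of the free group on a ring in which `x` is multiplication by `u` and `y` is
`v ↦ t (v + 1)`. -/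
def affineAction {R : Type*} [CommRing R] (u t : Rˣ) : FreeGroup (Fin 2) →* Equiv.Perm R :=
  FreeGroup.lift ![Units.mulLeft u, (Equiv.addRight (1 : R)).trans (Units.mulLeft t)]

variable {R : Type*} [CommRing R]

lemma affineAction_xx (u t : Rˣ) (v : R) : affineAction u t xx v = u * v := by
  simp [affineAction, xx]

lemma affineAction_xx_zpow (u t : Rˣ) (k : ℤ) (v : R) :
    affineAction u t (xx ^ k) v = (u ^ k : Rˣ) * v := by
  have h : affineAction u t xx = MulAction.toPermHom Rˣ R u := by
    ext v
    exact affineAction_xx u t v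
  rw [map_zpow, h, ← map_zpow]
  rfl

lemma affineAction_yy (u t : Rˣ) (v : R) : affineAction u t yy v = t * (v + 1) := by
  simp [affineAction, yy]

lemma affineAction_positiveWord (τ : Rˣ) (c : ℕ → ℤ) (p n : ℕ) (v : R) :
    affineAction (τ ^ (p : ℤ)) (τ ^ (-∑ i ∈ Finset.range p, c i)) (positiveWord c n) v =
      (τ ^ pathHeight c p n : Rˣ) * v +
        ∑ k ∈ Finset.range n, ((τ ^ pathHeight c p (k + 1) : Rˣ) : R) := by
  induction n generalizing v with
  | zero => simp [positiveWord_zero, pathHeight_zero]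
  | succ n ih =>
    rw [positiveWord_succ, map_mul, map_mul, Equiv.Perm.mul_apply, Equiv.Perm.mul_apply, ih,
      affineAction_xx_zpow, affineAction_yy, Finset.sum_range_succ, pathHeight_succ,
      sub_eq_add_neg, zpow_add, zpow_add, zpow_mul]
    push_cast
    ring

-- A primitive word that acts trivially forces the actions of `x` and `y` to commute.
theorem IsPrimitive.pow_eq_one_of_sum_zpow_pathHeight_eq_zero {c : ℕ → ℤ} {p : ℕ}
    (h : IsPrimitive (positiveWord c p)) (τ : Rˣ)
    (hτ : ∑ k ∈ Finset.range p, ((τ ^ pathHeight c p k : Rˣ) : R) = 0) : τ ^ p = 1 := by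
  have hshift : ∑ k ∈ Finset.range p, ((τ ^ pathHeight c p (k + 1) : Rˣ) : R) = 0 := by
    have := Finset.sum_range_succ' (fun k => ((τ ^ pathHeight c p k : Rˣ) : R)) p
    rw [Finset.sum_range_succ, pathHeight_self, pathHeight_zero] at this
    rw [← add_right_cancel this, hτ]
  set t := τ ^ (-∑ i ∈ Finset.range p, c i) with ht
  have hone : affineAction (τ ^ (p : ℤ)) t (positiveWord c p) = 1 := by
    ext v
    rw [ht, affineAction_positiveWord, hshift, pathHeight_self]
    simp
  have hcomm := DFunLike.congr_fun (h.commute_of_map_eq_one _ hone xx yy).eq 0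
  simp only [Equiv.Perm.mul_apply, affineAction_xx, affineAction_yy, mul_zero, zero_add,
    mul_one] at hcomm
  rwa [← Units.val_mul, Units.val_inj, mul_eq_right, zpow_natCast] at hcomm

end AffineAction

section HeightPolynomial

open Polynomial

lemma isUnit_root_of_isUnit_coeff_zero {R : Type*} [CommRing R] {f : R[X]}
    (h : IsUnit (f.coeff 0)) : IsUnit (AdjoinRoot.root f) := by
  have hmk := congrArg (AdjoinRoot.mk f) (X_mul_divX_add f)
  rw [AdjoinRoot.mk_self, map_add, map_mul, AdjoinRoot.mk_X, add_eq_zero_iff_eq_neg] at hmk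
  exact isUnit_of_mul_isUnit_left (hmk ▸ (h.map (AdjoinRoot.of f)).neg)

lemma natDegree_lt_of_dvd_X_pow_sub_one {R : Type*} [CommRing R] [IsDomain R] {p : ℕ} (hp : p ≠ 0)
    {f : R[X]} (hf : f.eval 1 ≠ 0) (h : f ∣ X ^ p - 1) : f.natDegree < p := by
  obtain ⟨g, hg⟩ := h
  have hne : f * g ≠ 0 := hg ▸ X_pow_sub_C_ne_zero (Nat.pos_of_ne_zero hp) 1
  have hdeg : f.natDegree + g.natDegree = p := by
    rw [← natDegree_mul (left_ne_zero_of_mul hne) (right_ne_zero_of_mul hne), ← hg]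
    exact natDegree_X_pow_sub_C
  have hroot : g.IsRoot 1 := by
    have := congrArg (eval 1) hg
    simpa [hf] using this.symm
  have := natDegree_pos_iff_degree_pos.2
    (degree_pos_of_root (right_ne_zero_of_mul hne) hroot)
  omega

/-- Up to a power of `X`, the image of the Fox derivative of `positiveWord c p` with respect to `y`
under `x ↦ X ^ p`, `y ↦ X ^ (-∑ i < p, c i)`. Subtracting a lower bound `L` of the heights makes it
a polynomial; other values of `L` are meaningless, since `Int.toNat` truncates. -/
noncomputable def heightPolynomial (c : ℕ → ℤ) (p : ℕ) (L : ℤ) : ℤ[X] :=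
  ∑ k ∈ Finset.range p, X ^ (pathHeight c p k - L).toNat

variable {c : ℕ → ℤ} {p : ℕ} {L : ℤ}

lemma eval_one_heightPolynomial : (heightPolynomial c p L).eval 1 = p := by
  simp [heightPolynomial, eval_finsetSum]

lemma coeff_heightPolynomial (hinj : Set.InjOn (pathHeight c p) (Finset.range p))
    (hL : ∀ k < p, L ≤ pathHeight c p k) {l : ℕ} (hl : l < p) :
    (heightPolynomial c p L).coeff (pathHeight c p l - L).toNat = 1 := by
  rw [heightPolynomial, finsetSum_coeff, Finset.sum_eq_single_of_mem l (Finset.mem_range.2 hl)]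
  · exact coeff_X_pow_self _
  · intro k hk hkl
    have hne := mt (hinj hk (by simpa using hl)) hkl
    have := hL k (Finset.mem_range.1 hk)
    have := hL l hl
    rw [coeff_X_pow, if_neg (by omega)]

lemma eval₂_heightPolynomial {R : Type*} [CommRing R] (hL : ∀ k < p, L ≤ pathHeight c p k)
    (f : ℤ →+* R) (τ : Rˣ) : (τ ^ L : Rˣ) * (heightPolynomial c p L).eval₂ f τ =
      ∑ k ∈ Finset.range p, ((τ ^ pathHeight c p k : Rˣ) : R) := by
  rw [heightPolynomial, eval₂_finsetSum, Finset.mul_sum]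
  refine Finset.sum_congr rfl fun k hk => ?_
  rw [eval₂_X_pow, ← Units.val_pow_eq_pow_val, ← Units.val_mul, ← zpow_natCast, ← zpow_add,
    Int.toNat_of_nonneg (sub_nonneg.2 (hL k (Finset.mem_range.1 hk))), add_sub_cancel]

lemma IsPrimitive.heightPolynomial_dvd (h : IsPrimitive (positiveWord c p))
    (hL : ∀ k < p, L ≤ pathHeight c p k)
    (hunit : IsUnit ((heightPolynomial c p L).coeff 0)) :
    heightPolynomial c p L ∣ X ^ p - 1 := by
  obtain ⟨τ, hτ⟩ := isUnit_root_of_isUnit_coeff_zero hunit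
  have hsum := eval₂_heightPolynomial hL (AdjoinRoot.of _) τ
  rw [hτ, AdjoinRoot.eval₂_root, mul_zero] at hsum
  have hpow := h.pow_eq_one_of_sum_zpow_pathHeight_eq_zero τ hsum.symm
  rw [← AdjoinRoot.mk_eq_zero, map_sub, map_pow, AdjoinRoot.mk_X, map_one, ← hτ,
    ← Units.val_pow_eq_pow_val, hpow, Units.val_one, sub_self]

theorem IsPrimitive.exists_pathHeight_mem_Ico (h : IsPrimitive (positiveWord c p)) (hp : 0 < p) :
    ∃ L : ℤ, ∀ k ≤ p, pathHeight c p k ∈ Set.Ico L (L + p) := by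
  have hinj := injOn_pathHeight h.isCoprime_sum
  obtain ⟨l, hl, hmin⟩ :=
    Finset.exists_min_image (Finset.range p) (pathHeight c p) ⟨0, Finset.mem_range.2 hp⟩
  simp only [Finset.mem_range] at hl hmin
  have hcoeff {k : ℕ} (hk : k < p) := coeff_heightPolynomial hinj hmin hk
  have hunit : IsUnit ((heightPolynomial c p (pathHeight c p l)).coeff 0) := by
    have := hcoeff hl
    rw [sub_self, Int.toNat_zero] at this
    exact this ▸ isUnit_one
  have hdeg := natDegree_lt_of_dvd_X_pow_sub_one hp.ne'
    (by simpa [eval_one_heightPolynomial] using hp.ne') (h.heightPolynomial_dvd hmin hunit)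
  have hstrip {k : ℕ} (hk : k < p) :
      pathHeight c p k ∈ Set.Ico (pathHeight c p l) (pathHeight c p l + p) := by
    have := le_natDegree_of_ne_zero (hcoeff hk ▸ one_ne_zero)
    exact ⟨hmin k hk, by omega⟩
  refine ⟨pathHeight c p l, fun k hk => ?_⟩
  rcases hk.lt_or_eq with hk | rfl
  · exact hstrip hk
  · rw [pathHeight_self, ← pathHeight_zero c k]
    exact hstrip hp

end HeightPolynomial

section Balanced

variable {c : ℕ → ℤ} {p : ℕ}

theorem IsPrimitive.exists_exponent_eq_ite (h : IsPrimitive (positiveWord c p)) (hp : 0 < p) :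
    ∃ u : ℤ, ∀ k < p, c k = (∑ i ∈ Finset.range p, c i) / p +
      if (u - k * ∑ i ∈ Finset.range p, c i) % p < (∑ i ∈ Finset.range p, c i) % p
      then 1 else 0 := by
  obtain ⟨L, hL⟩ := h.exists_pathHeight_mem_Ico hp
  refine ⟨-L, fun k hk => ?_⟩
  obtain ⟨hlow, hupp⟩ := hL k hk.le
  obtain ⟨hlow', hupp'⟩ := hL (k + 1) hk
  have hres : (-L - k * ∑ i ∈ Finset.range p, c i) % p = pathHeight c p k - L := by
    rw [← Int.emod_eq_of_lt (sub_nonneg.2 hlow) (sub_lt_iff_lt_add'.2 hupp)]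
    refine Int.ModEq.symm ?_
    convert (pathHeight_modEq c p k).sub_right L using 1
    ring
  rw [hres]
  rw [pathHeight_succ] at hlow' hupp'
  generalize ∑ i ∈ Finset.range p, c i = S at *
  have hdiv := Int.mul_ediv_add_emod S p
  have hmod := Int.emod_nonneg S (show (p : ℤ) ≠ 0 by omega)
  have hstep : p * (c k - S / p) = p * c k - S + S % p := by linear_combination -hdiv
  have hmod' := Int.emod_lt_of_pos S (show (0 : ℤ) < p by omega)
  have hlo : 0 ≤ c k - S / p := by nlinarith
  have hhi : c k - S / p ≤ 1 := by nlinarith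
  obtain h0 | h1 : c k - S / p = 0 ∨ c k - S / p = 1 := by omega
  · rw [h0, mul_zero] at hstep
    rw [if_neg (by omega)]
    omega
  · rw [h1, mul_one] at hstep
    rw [if_pos (by omega)]
    omega

theorem IsPrimitive.isUnit_of_forall_dvd (h : IsPrimitive (positiveWord c p)) (hp : 0 < p)
    (hp1 : p ≠ 1) {m : ℤ} (hm : ∀ k < p, m ∣ c k) : IsUnit m := by
  obtain ⟨u, hu⟩ := h.exists_exponent_eq_ite hp
  by_contra hunit
  have hconst : ∀ k < p, c k = c 0 := by
    intro k hk
    have hdvd := dvd_sub (hm k hk) (hm 0 hp)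
    rw [hu k hk, hu 0 hp] at hdvd ⊢
    split_ifs at hdvd ⊢ <;> simp_all [isUnit_iff_dvd_one]
  have hsum : ∑ i ∈ Finset.range p, c i = p * c 0 := by
    simpa using Finset.sum_congr rfl fun i hi => hconst i (Finset.mem_range.1 hi)
  have hself : IsCoprime (p : ℤ) p := (hsum ▸ h.isCoprime_sum).of_mul_left_left
  rw [Nat.isCoprime_iff_coprime, Nat.coprime_self] at hself
  exact hp1 hself

end Balanced

section Intervals

variable {p ρ : ℕ}

lemma eq_one_or_eq_sub_one_of_unique_exit (hρ : 2 ≤ ρ) (hρp : ρ + 2 ≤ p) {β : ℕ} (hβ : β ≠ 0)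
    (hβp : β < p)
    (h : ∀ v < ρ, ∀ v' < ρ, ρ ≤ (v + β) % p → ρ ≤ (v' + β) % p → v = v') :
    β = 1 ∨ β = p - 1 := by
  by_contra hβ'
  have hexit {v : ℕ} (hv : v + β < p) (hv' : ρ ≤ v + β) : ρ ≤ (v + β) % p := by
    rwa [Nat.mod_eq_of_lt hv]
  rcases le_or_gt β (p - ρ) with hle | hgt
  · have := h (ρ - 1) (by omega) (ρ - 2) (by omega) (hexit (by omega) (by omega))
      (hexit (by omega) (by omega))
    omega
  · have := h (p - 1 - β) (by omega) (p - 2 - β) (by omega) (hexit (by omega) (by omega))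
      (hexit (by omega) (by omega))
    omega

lemma val_eq_sub_one_of_val_lt_of_le_val_add_one [NeZero p] (hρp : ρ < p) {z : ZMod p}
    (hz : z.val < ρ) (hz' : ρ ≤ (z + 1).val) : z.val = ρ - 1 := by
  have : (z + 1).val = z.val + 1 := by
    rw [← ZMod.natCast_zmod_val z]
    norm_cast
    rw [ZMod.val_cast_of_lt (by omega), ZMod.val_cast_of_lt (by omega)]
  omega

-- The step `1` leaves the interval at one point only, so its image `σ` does too.
theorem units_eq_one_or_eq_neg_one_of_val_lt_iff [NeZero p] (hρ : 2 ≤ ρ) (hρp : ρ + 2 ≤ p)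
    (σ : (ZMod p)ˣ) (u : ZMod p) (h : ∀ z : ZMod p, z.val < ρ ↔ (u + σ * z).val < ρ) :
    (σ : ZMod p) = 1 ∨ (σ : ZMod p) = -1 := by
  have hexit (v : ZMod p) (hv : v.val < ρ) (hv' : ρ ≤ (v + σ).val) :
      v = u + σ * (ρ - 1 : ℕ) := by
    obtain ⟨z, rfl⟩ : ∃ z, u + σ * z = v := ⟨σ⁻¹ * (v - u), by simp⟩
    rw [← h] at hv
    rw [add_assoc, ← mul_add_one, ← not_lt, ← h, not_lt] at hv'
    rw [← val_eq_sub_one_of_val_lt_of_le_val_add_one (by omega) hv hv', ZMod.natCast_zmod_val]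
  have hunique : ∀ v < ρ, ∀ v' < ρ, ρ ≤ (v + (σ : ZMod p).val) % p →
      ρ ≤ (v' + (σ : ZMod p).val) % p → v = v' := by
    intro v hv v' hv' hvσ hvσ'
    have hcast {i : ℕ} (hi : i < ρ) (hiσ : ρ ≤ (i + (σ : ZMod p).val) % p) :=
      hexit i (by rwa [ZMod.val_cast_of_lt (by omega)])
        (by rwa [ZMod.val_add, ZMod.val_cast_of_lt (by omega)])
    have := congrArg ZMod.val ((hcast hv hvσ).trans (hcast hv' hvσ').symm)
    rwa [ZMod.val_cast_of_lt (by omega), ZMod.val_cast_of_lt (by omega)] at this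
  have : Fact (1 < p) := ⟨by omega⟩
  have hne : (σ : ZMod p).val ≠ 0 := by simp
  rcases eq_one_or_eq_sub_one_of_unique_exit hρ hρp hne (ZMod.val_lt _) hunique with h1 | h1
  · left
    rw [← ZMod.natCast_zmod_val (σ : ZMod p), h1, Nat.cast_one]
  · right
    rw [← ZMod.natCast_zmod_val (σ : ZMod p), h1, Nat.cast_pred (by omega)]
    simp

theorem natCast_eq_or_eq_neg_of_mul_mod_lt_iff {q r : ℕ} (hpq : p.Coprime q) (hpr : p.Coprime r)
    (hρ : 2 ≤ ρ) (hρp : ρ + 2 ≤ p) (u : ℤ)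
    (h : ∀ k < p, k * q % p < ρ ↔ (u - k * r) % p < ρ) :
    (r : ZMod p) = q ∨ (r : ZMod p) = -q := by
  have : NeZero p := ⟨by omega⟩
  have hq : IsUnit (q : ZMod p) := (ZMod.isUnit_iff_coprime q p).2 hpq.symm
  have hr : IsUnit (r : ZMod p) := (ZMod.isUnit_iff_coprime r p).2 hpr.symm
  obtain ⟨σ, hσ⟩ : ∃ σ : (ZMod p)ˣ, (σ : ZMod p) * q = -r :=
    ⟨-(hr.unit * hq.unit⁻¹), by simp [mul_assoc]⟩
  have hval (z : ZMod p) : z.val < ρ ↔ (u + σ * z : ZMod p).val < ρ := by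
    obtain ⟨k, rfl⟩ : ∃ k : ZMod p, k * q = z := ⟨z * ↑hq.unit⁻¹, by simp [mul_assoc]⟩
    have hleft : (k * q : ZMod p).val = k.val * q % p := by simp [ZMod.val_mul]
    have hright : (u + σ * (k * q) : ZMod p).val = (u - k.val * r) % p := by
      rw [← ZMod.val_intCast]
      congr 2
      push_cast
      rw [ZMod.natCast_zmod_val]
      linear_combination k * hσ
    rw [hleft, h k.val k.val_lt, ← hright, Nat.cast_lt]
  rcases units_eq_one_or_eq_neg_one_of_val_lt_iff hρ hρp σ u hval with h1 | h1
  · right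
    linear_combination hσ - q * h1
  · left
    linear_combination hσ - q * h1

end Intervals

section TwistedTorusWord

/-- The exponent `e_j` of the twisted torus word `w`. -/
def blockExponent (p q r j : ℕ) : ℕ := if j * q % p < r % p then r / p + 1 else r / p

lemma w_eq_positiveWord (p q r : ℕ) (m : ℤ) :
    w p q r m = positiveWord (fun j => m * blockExponent p q r j) p := rfl

lemma w_one_right_eq_rotationWord (p q r : ℕ) :
    w p q r 1 = rotationWord (xx * (xx ^ (r / p) * yy)) (xx ^ (r / p) * yy) p q (r % p) := by
  refine congrArg List.prod (List.map_congr_left fun j _ => ?_)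
  rw [one_mul, zpow_natCast, ← mul_assoc, ← pow_succ', apply_ite (xx ^ · * yy)]

variable {p q r : ℕ}

/-- The automorphism inverting `xx` and fixing `yy`, which carries `w p q r m` to `w p q r (-m)`. -/
def invertLeft : FreeGroup (Fin 2) ≃* FreeGroup (Fin 2) :=
  MonoidHom.toMulEquiv (FreeGroup.lift ![xx⁻¹, yy]) (FreeGroup.lift ![xx⁻¹, yy])
    (by ext i; fin_cases i <;> simp [xx, yy])
    (by ext i; fin_cases i <;> simp [xx, yy])

lemma isPrimitive_w_neg_iff {m : ℤ} :
    IsPrimitive (w p q r (-m)) ↔ IsPrimitive (w p q r m) := by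
  have hxx : invertLeft xx = xx⁻¹ := by simp [invertLeft, xx]
  have hyy : invertLeft yy = yy := by simp [invertLeft, yy]
  have hmap (n : ℤ) : invertLeft (w p q r n) = w p q r (-n) := by
    rw [w, w, map_list_prod, List.map_map]
    refine congrArg List.prod (List.map_congr_left fun j _ => ?_)
    rw [Function.comp_apply, map_mul, map_zpow, hxx, hyy, inv_zpow', neg_mul]
  exact ⟨fun h => by simpa [hmap] using h.map invertLeft, fun h => hmap m ▸ h.map invertLeft⟩

lemma sum_blockExponent (hp : 0 < p) (hpq : p.Coprime q) (r : ℕ) :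
    ∑ j ∈ Finset.range p, blockExponent p q r j = r := by
  have hfilter : (Finset.range p).filter (· < r % p) = Finset.range (r % p) := by
    ext i
    have := Nat.mod_lt r hp
    simp only [Finset.mem_filter, Finset.mem_range]
    omega
  calc ∑ j ∈ Finset.range p, blockExponent p q r j
    _ = ∑ i ∈ Finset.range p, if i < r % p then r / p + 1 else r / p :=
        sum_range_mul_mod hpq fun i => if i < r % p then r / p + 1 else r / p
    _ = ∑ i ∈ Finset.range p, (r / p + if i < r % p then 1 else 0) :=
        Finset.sum_congr rfl fun i _ => (apply_ite (r / p + ·) _ 1 0).symm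
    _ = p * (r / p) + r % p := by
        rw [Finset.sum_add_distrib, ← Finset.card_filter, hfilter]
        simp
    _ = r := Nat.div_add_mod r p

theorem isPrimitive_w_one_right (hp : 0 < p) (hp1 : p ≠ 1) (hpq : p.Coprime q)
    (h : (r : ℤ) ≡ 1 [ZMOD p] ∨ (r : ℤ) ≡ -1 [ZMOD p] ∨ (r : ℤ) ≡ q [ZMOD p] ∨
      (r : ℤ) ≡ -q [ZMOD p]) : IsPrimitive (w p q r 1) := by
  have hbasis : IsBasisPair (xx * (xx ^ (r / p) * yy)) (xx ^ (r / p) * yy) := by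
    exact_mod_cast (IsBasisPair.generators.zpow_mul (r / p : ℕ)).mul_left
  have hone : 1 % p = 1 := Nat.mod_eq_of_lt (by omega)
  rw [w_one_right_eq_rotationWord]
  rcases h with h | h | h | h
  · rw [show r % p = 1 % p from Int.natCast_modEq_iff.1 h, hone]
    exact isPrimitive_rotationWord_one hbasis hp hpq
  · rw [mod_eq_sub_mod_of_intModEq_neg (c := 1) hp (by omega) h, hone]
    exact isPrimitive_rotationWord_sub_one hbasis hp hpq
  · rw [show r % p = q % p from Int.natCast_modEq_iff.1 h]
    exact isPrimitive_rotationWord_mod hbasis hp hpq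
  · have hq : q % p ≠ 0 := fun h0 => hp1 (hpq.eq_one_of_dvd (Nat.dvd_of_mod_eq_zero h0))
    rw [mod_eq_sub_mod_of_intModEq_neg hp hq h]
    exact isPrimitive_rotationWord_sub_mod hbasis hp hpq

theorem modEq_of_isPrimitive_w_one_right (hp : 0 < p) (hp1 : p ≠ 1) (hpq : p.Coprime q)
    (h : IsPrimitive (w p q r 1)) :
    (r : ℤ) ≡ 1 [ZMOD p] ∨ (r : ℤ) ≡ -1 [ZMOD p] ∨ (r : ℤ) ≡ q [ZMOD p] ∨
      (r : ℤ) ≡ -q [ZMOD p] := by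
  have hsum : ∑ j ∈ Finset.range p, (1 : ℤ) * blockExponent p q r j = r := by
    simp only [one_mul]
    exact_mod_cast sum_blockExponent hp hpq r
  rw [w_eq_positiveWord] at h
  have hpr : p.Coprime r := by
    have := h.isCoprime_sum
    rw [hsum, Nat.isCoprime_iff_coprime] at this
    exact this.symm
  obtain ⟨u, hu⟩ := h.exists_exponent_eq_ite hp
  rw [hsum] at hu
  have hblock (k : ℕ) (hk : k < p) : k * q % p < r % p ↔ (u - k * r) % p < (r % p : ℕ) := by
    have := hu k hk
    rw [one_mul, blockExponent] at this
    push_cast at this ⊢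
    split_ifs at this <;> omega
  have hρ0 : r % p ≠ 0 := fun h0 => hp1 (hpr.eq_one_of_dvd (Nat.dvd_of_mod_eq_zero h0))
  have hcase : r % p = 1 ∨ r % p = p - 1 ∨ (2 ≤ r % p ∧ r % p + 2 ≤ p) := by
    have := Nat.mod_lt r hp
    omega
  simp only [← ZMod.intCast_eq_intCast_iff]
  push_cast
  rcases hcase with h1 | h1 | ⟨hρ, hρp⟩
  · exact .inl (by rw [← ZMod.natCast_mod, h1, Nat.cast_one])
  · exact .inr (.inl (by
      rw [← ZMod.natCast_mod, h1, Nat.cast_pred hp, ZMod.natCast_self, zero_sub]))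
  · exact .inr (.inr (natCast_eq_or_eq_neg_of_mul_mod_lt_iff hpq hpr hρ hρp u hblock))

lemma isPrimitive_w_one_left (q r : ℕ) (m : ℤ) : IsPrimitive (w 1 q r m) := by
  simpa [w, Nat.mod_one] using (IsBasisPair.generators.zpow_mul (m * r)).isPrimitive_right

theorem stmt0_general (p q r : ℕ) (m : ℤ) (hp : 0 < p) (hpq : p.Coprime q) :
    IsPrimitive (w p q r m) ↔
      p = 1 ∨ (IsUnit m ∧
        ((r : ℤ) ≡ 1 [ZMOD p] ∨ (r : ℤ) ≡ -1 [ZMOD p] ∨ (r : ℤ) ≡ q [ZMOD p] ∨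
          (r : ℤ) ≡ -q [ZMOD p])) := by
  rcases eq_or_ne p 1 with rfl | hp1
  · simp only [isPrimitive_w_one_left, true_or]
  have hiff : IsPrimitive (w p q r m) ↔ IsUnit m ∧ IsPrimitive (w p q r 1) := by
    constructor
    · intro h
      have hm : IsUnit m := h.isUnit_of_forall_dvd hp hp1 fun k _ => dvd_mul_right m _
      rcases Int.isUnit_iff.1 hm with rfl | rfl
      · exact ⟨hm, h⟩
      · exact ⟨hm, isPrimitive_w_neg_iff.1 h⟩
    · rintro ⟨hm, h⟩
      rcases Int.isUnit_iff.1 hm with rfl | rfl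
      · exact h
      · exact isPrimitive_w_neg_iff.2 h
  rw [hiff, or_iff_right hp1]
  exact and_congr_right fun _ =>
    ⟨modEq_of_isPrimitive_w_one_right hp hp1 hpq, isPrimitive_w_one_right hp hp1 hpq⟩

end TwistedTorusWord

/-- Theorem (primitivity criterion for twisted torus knot words):
for coprime `p ≥ 1`, `q ≥ 1`, `r ≥ 0`, `m ≥ 1`, the word `w_{p,q,r,m}` is
primitive iff `p = 1`, or `m = 1` and `r ≡ ±1` or `±q (mod p)`. -/
theorem stmt0 (p q r : ℕ) (m : ℤ) (hp : 1 ≤ p) (hq : 1 ≤ q)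
    (hpq : Nat.Coprime p q) (hm : 1 ≤ m) :
    IsPrimitive (w p q r m) ↔
      p = 1 ∨ (m = 1 ∧
        ((r : ℤ) ≡ 1 [ZMOD (p : ℤ)] ∨ (r : ℤ) ≡ -1 [ZMOD (p : ℤ)] ∨
         (r : ℤ) ≡ (q : ℤ) [ZMOD (p : ℤ)] ∨ (r : ℤ) ≡ -(q : ℤ) [ZMOD (p : ℤ)])) := by
  rw [stmt0_general p q r m hp hpq, Int.isUnit_iff]
  simp only [show ¬ m = -1 by omega, or_false]
end

section
/- Let p ≥ 1 be an integer, r ≥ 0 and m integers, and let q, q' ≥ 1 be integers with gcd(p,q) = gcd(p,q') = 1 such that q ≡ q' (mod p) or q ≡ −q' (mod p). Then there is an automorphism of the free group F mapping w_{p,q,r,m} to w_{p,q',r,m}. -/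
/-!
The factors of `w p q r m` form a `p`-periodic sequence depending only on whether
`j * q % p < r % p`, and starting the period elsewhere conjugates the product. So it is enough that
replacing `q` by `-q` shifts this pattern, which is constant if `r % p = 0`. Otherwise let `c` be
the largest residue below `r % p` among the multiples of `q` in `ZMod p`. Then `a ↦ c - a` is an
involution of the multiples of `q` preserving those below `r % p`, and with `c = t * q` it turns
`j * -q` into `(j + t) * q`.
-/

section PeriodicProduct

variable {G : Type*} [Group G]

theorem isConj_mul_comm (a b : G) : IsConj (a * b) (b * a) :=
  isConj_iff.mpr ⟨a⁻¹, by group⟩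

variable {f : ℕ → G} {n : ℕ}

theorem isConj_prod_range_comp_add_one (hf : f.Periodic n) :
    IsConj ((List.range n).map f).prod ((List.range n).map fun j => f (j + 1)).prod := by
  cases n with
  | zero => exact IsConj.refl _
  | succ n =>
    have wrap_around : f (n + 1) = f 0 := hf.eq
    rw [List.prod_range_succ' f, List.prod_range_succ (fun j => f (j + 1)), wrap_around]
    exact isConj_mul_comm _ _

theorem isConj_prod_range_comp_add (hf : f.Periodic n) (t : ℕ) :
    IsConj ((List.range n).map f).prod ((List.range n).map fun j => f (j + t)).prod := by
  induction t with
  | zero => exact IsConj.refl _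
  | succ t ih =>
    have shifted_periodic : (fun j => f (j + t)).Periodic n := fun j => by
      simpa only [Nat.add_right_comm] using hf (j + t)
    simpa only [Nat.add_right_comm, Nat.add_assoc] using
      ih.trans (isConj_prod_range_comp_add_one shifted_periodic)

end PeriodicProduct

theorem isConj_w_of_shift {p q q' r : ℕ} (m : ℤ) (t : ℕ)
    (h : ∀ j, (j + t) * q % p < r % p ↔ j * q' % p < r % p) :
    IsConj (w p q r m) (w p q' r m) := by
  have factors_periodic : (fun j => xx ^ (m * ((if j * q % p < r % p then r / p + 1
      else r / p : ℕ) : ℤ)) * yy).Periodic p := fun j => by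
    simp only [add_mul, Nat.add_mul_mod_self_left]
  simpa only [w, h] using isConj_prod_range_comp_add factors_periodic t

theorem exists_mem_forall_val_sub_lt_iff {n : ℕ} [NeZero n] (H : AddSubgroup (ZMod n)) (s : ℕ) :
    ∃ c ∈ H, ∀ a ∈ H, (c - a).val < s ↔ a.val < s := by
  rcases s.eq_zero_or_pos with rfl | hs
  · exact ⟨0, H.zero_mem, by simp⟩
  obtain ⟨c, ⟨hcH, hcs⟩, hmax⟩ := Set.exists_max_image {a ∈ (H : Set (ZMod n)) | a.val < s}
    ZMod.val (Set.toFinite _) ⟨0, H.zero_mem, by simpa using hs⟩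
  have sub_lt {a} (ha : a ∈ H) (has : a.val < s) : (c - a).val < s := by
    rw [ZMod.val_sub (hmax a ⟨ha, has⟩)]
    exact (Nat.sub_le _ _).trans_lt hcs
  refine ⟨c, hcH, fun a ha => ⟨fun h => ?_, sub_lt ha⟩⟩
  simpa only [sub_sub_cancel] using sub_lt (H.sub_mem hcH ha) h

theorem exists_shift_mul_mod_lt_iff {p q q' : ℕ} [NeZero p]
    (h : (q : ℤ) ≡ -(q' : ℤ) [ZMOD (p : ℤ)]) (s : ℕ) :
    ∃ t, ∀ j, (j + t) * q % p < s ↔ j * q' % p < s := by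
  have hq : (q : ZMod p) = -q' := by
    simpa using (ZMod.intCast_eq_intCast_iff _ _ p).mpr h
  obtain ⟨c, hc, hreflect⟩ :=
    exists_mem_forall_val_sub_lt_iff (AddSubgroup.zmultiples (q : ZMod p)) s
  obtain ⟨t, rfl⟩ := mem_multiples_iff_mem_zmultiples.mpr hc
  refine ⟨t, fun j => ?_⟩
  have hj : (j * q' : ZMod p) ∈ AddSubgroup.zmultiples (q : ZMod p) := ⟨-j, by simp [hq]⟩
  have shift_eq_reflection : (((j + t) * q : ℕ) : ZMod p) = t • (q : ZMod p) - j * q' := by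
    push_cast
    rw [hq, nsmul_eq_mul]
    ring
  have hval := hreflect _ hj
  rw [← shift_eq_reflection, ← Nat.cast_mul, ZMod.val_natCast, ZMod.val_natCast] at hval
  exact hval

theorem stmt1_general {p q q' : ℕ} (r : ℕ) (m : ℤ) (hp : 1 ≤ p)
    (hcong : (q : ℤ) ≡ (q' : ℤ) [ZMOD (p : ℤ)] ∨ (q : ℤ) ≡ -(q' : ℤ) [ZMOD (p : ℤ)]) :
    IsConj (w p q r m) (w p q' r m) := by
  have : NeZero p := ⟨Nat.one_le_iff_ne_zero.mp hp⟩
  obtain ⟨t, ht⟩ : ∃ t, ∀ j, (j + t) * q % p < r % p ↔ j * q' % p < r % p := by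
    rcases hcong with h | h
    · have hmod (j : ℕ) : j * q % p = j * q' % p := (Int.natCast_modEq_iff.mp h).mul_left j
      exact ⟨0, fun j => by rw [add_zero, hmod]⟩
    · exact exists_shift_mul_mod_lt_iff h (r % p)
  exact isConj_w_of_shift m t ht

/-- If `q ≡ ±q' (mod p)` then `w_{p,q,r,m}` and `w_{p,q',r,m}` are equivalent,
i.e. some automorphism of the free group maps one to the other. -/
theorem stmt1 (p r : ℕ) (m : ℤ) (q q' : ℕ) (hp : 1 ≤ p)
    (hq : 1 ≤ q) (hq' : 1 ≤ q')
    (hpq : Nat.Coprime p q) (hpq' : Nat.Coprime p q')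
    (hcong : (q : ℤ) ≡ (q' : ℤ) [ZMOD (p : ℤ)] ∨ (q : ℤ) ≡ -(q' : ℤ) [ZMOD (p : ℤ)]) :
    ∃ φ : FreeGroup (Fin 2) ≃* FreeGroup (Fin 2), φ (w p q r m) = w p q' r m := by
  obtain ⟨c, hc⟩ := isConj_iff.mp (stmt1_general r m hp hcong)
  exact ⟨MulAut.conj c, hc⟩
end

section
/- Let p ≥ 1 and q ≥ 1 be coprime integers, m an integer, and let r, r' ≥ 0 be integers such that r ≡ r' (mod p) or r ≡ −r' (mod p). Then there is an automorphism of the free group F mapping w_{p,q,r,m} to w_{p,q,r',m}. -/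
/-
Up to automorphisms of `F`, the word `∏ x ^ (e j) * y` with a periodic exponent sequence `e` depends
on `e` only up to a shift `e j ↦ e (j + k)` of the index, which is a conjugation, and up to a
reflection `e j ↦ k - e j` of the exponents, which is induced by `x ↦ x⁻¹`, `y ↦ x ^ k * y`. The
exponents of `w p q r m` are `m * e j` with `e j = ⌈(r - (j * q mod p)) / p⌉`. Adding `p * c` to `r`
adds `c` to every `e j`, which is two reflections. If `k * q ≡ r (mod p)`, shifting the index by `k`
gives `⌊(r + (j * q mod p)) / p⌋`, the negative of the exponent attached to `-r`; hence negating `r`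
is a shift followed by a reflection.
-/

/-- Equivalence of elements of a group, written `g ≡ h` in the paper: some automorphism maps `g`
to `h`. -/
def AutEquiv {G : Type*} [Mul G] (g h : G) : Prop :=
  ∃ φ : G ≃* G, φ g = h

theorem AutEquiv.trans {G : Type*} [Mul G] {g h k : G} :
    AutEquiv g h → AutEquiv h k → AutEquiv g k := by
  rintro ⟨φ, rfl⟩ ⟨ψ, rfl⟩
  exact ⟨φ.trans ψ, rfl⟩

theorem AutEquiv.of_isConj {G : Type*} [Group G] {g h : G} (hgh : IsConj g h) : AutEquiv g h := by
  obtain ⟨c, hc⟩ := isConj_iff.1 hgh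
  exact ⟨MulAut.conj c, hc⟩

section PeriodicProduct

variable {G : Type*} [Group G] {g : ℕ → G} {n : ℕ}

theorem isConj_prod_range_shift_one (hg : Function.Periodic g n) :
    IsConj ((List.range n).map g).prod ((List.range n).map fun j => g (j + 1)).prod := by
  have hprod : ((List.range n).map g).prod * g 0 =
      g 0 * ((List.range n).map fun j => g (j + 1)).prod := by
    rw [← hg.eq, ← List.prod_range_succ, List.prod_range_succ', hg.eq]
  refine isConj_iff.2 ⟨(g 0)⁻¹, ?_⟩
  rw [inv_inv, mul_assoc, hprod, inv_mul_cancel_left]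

theorem isConj_prod_range_shift (hg : Function.Periodic g n) (k : ℕ) :
    IsConj ((List.range n).map g).prod ((List.range n).map fun j => g (j + k)).prod := by
  induction k with
  | zero => exact IsConj.refl _
  | succ k ih =>
    simpa only [add_assoc, add_comm 1 k] using
      ih.trans (isConj_prod_range_shift_one (hg.add_const k))

end PeriodicProduct

/-- The involution `x ↦ x⁻¹`, `y ↦ x ^ k * y` of the free group, which reflects the exponents of a
word `∏ x ^ (f j) * y`. -/
def reflection (k : ℤ) : FreeGroup (Fin 2) ≃* FreeGroup (Fin 2) :=
  let φ : FreeGroup (Fin 2) →* FreeGroup (Fin 2) := FreeGroup.lift ![xx⁻¹, xx ^ k * yy]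
  have hφ : φ.comp φ = MonoidHom.id _ := by
    ext i
    fin_cases i <;> simp [φ, xx, yy]
  φ.toMulEquiv φ hφ hφ

theorem reflection_xx (k : ℤ) : reflection k xx = xx⁻¹ := by
  simp [reflection, xx]

theorem reflection_yy (k : ℤ) : reflection k yy = xx ^ k * yy := by
  simp [reflection, yy]

/-- The word `∏_{j < n} x ^ (f j) * y` with exponent sequence `f`, the common shape of the words
`w p q r m`. -/
def expWord (n : ℕ) (f : ℕ → ℤ) : FreeGroup (Fin 2) :=
  ((List.range n).map fun j => xx ^ f j * yy).prod

section ExpWord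

variable (n : ℕ) (f : ℕ → ℤ)

theorem reflection_expWord (k : ℤ) :
    reflection k (expWord n f) = expWord n fun j => k - f j := by
  have hsyllable (j : ℕ) : reflection k (xx ^ f j * yy) = xx ^ (k - f j) * yy := by
    rw [map_mul, map_zpow, reflection_xx, reflection_yy, inv_zpow', ← mul_assoc, ← zpow_add,
      neg_add_eq_sub]
  simp only [expWord, map_list_prod, List.map_map, Function.comp_def, hsyllable]

theorem autEquiv_expWord_sub (k : ℤ) : AutEquiv (expWord n f) (expWord n fun j => k - f j) :=
  ⟨reflection k, reflection_expWord n f k⟩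

theorem autEquiv_expWord_add (k : ℤ) : AutEquiv (expWord n f) (expWord n fun j => f j + k) := by
  simpa only [zero_sub, sub_neg_eq_add, add_comm k] using
    (autEquiv_expWord_sub n f 0).trans (autEquiv_expWord_sub n _ k)

variable {n f}

theorem autEquiv_expWord_shift (hf : Function.Periodic f n) (k : ℕ) :
    AutEquiv (expWord n f) (expWord n fun j => f (j + k)) :=
  .of_isConj <| isConj_prod_range_shift (hf.comp fun e => xx ^ e * yy) k

end ExpWord

/-- The exponent `e_j = ⌈(r - (j * q mod p)) / p⌉` of the paper's word, for an arbitrary integer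
`r`. The ceiling is encoded as a negated floor, `/` being floor division for a positive divisor. -/
def exponent (p q : ℕ) (r : ℤ) (j : ℕ) : ℤ :=
  -((j * q % p - r) / p)

section Exponent

variable {p q : ℕ}

theorem exponent_periodic (r : ℤ) : Function.Periodic (exponent p q r) p := by
  intro j
  simp [exponent, add_mul]

theorem exponent_add_mul (hp : 0 < p) (r c : ℤ) (j : ℕ) :
    exponent p q (r + p * c) j = exponent p q r j + c := by
  have hp' : (p : ℤ) ≠ 0 := by exact_mod_cast hp.ne'
  rw [exponent, exponent, ← sub_sub, Int.sub_mul_ediv_left _ _ hp', neg_sub', sub_neg_eq_add]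

theorem exponent_eq_ite_of_lt {r : ℤ} (hr₀ : 0 ≤ r) (hr : r < p) (j : ℕ) :
    exponent p q r j = if (j * q % p : ℤ) < r then 1 else 0 := by
  have hp : (0 : ℤ) < p := hr₀.trans_lt hr
  have hs₀ : 0 ≤ (j * q % p : ℤ) := Int.emod_nonneg _ hp.ne'
  have hs : (j * q % p : ℤ) < p := Int.emod_lt_of_pos _ hp
  rw [exponent]
  split_ifs with hlt
  · rw [Int.ediv_eq_neg_one_of_neg_of_le (by linarith) (by linarith), neg_neg]
  · rw [Int.ediv_eq_zero_of_lt (by linarith) (by linarith), neg_zero]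

theorem exponent_natCast (hp : 0 < p) (r j : ℕ) :
    exponent p q r j = (if j * q % p < r % p then r / p + 1 else r / p : ℕ) := by
  have hp' : (0 : ℤ) < p := by exact_mod_cast hp
  conv_lhs => rw [← Int.emod_add_mul_ediv (r : ℤ) p]
  rw [exponent_add_mul hp,
    exponent_eq_ite_of_lt (Int.emod_nonneg _ hp'.ne') (Int.emod_lt_of_pos _ hp')]
  norm_cast
  split_ifs <;> ring

theorem exponent_shift (hp : 0 < p) {k : ℕ} {r : ℤ} (hk : k * q ≡ r [ZMOD p]) (j : ℕ) :
    exponent p q r (j + k) = -exponent p q (-r) j := by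
  have hp' : (p : ℤ) ≠ 0 := by exact_mod_cast hp.ne'
  have hmod : ((j + k : ℕ) * q % p : ℤ) = (j * q % p + r) % p := by
    push_cast
    rw [add_mul, Int.emod_add_emod]
    exact hk.add_left _
  have hnum : ((j + k : ℕ) * q % p - r : ℤ) = j * q % p - p * ((j * q % p + r) / p) := by
    rw [hmod, Int.emod_def (j * q % p + r)]
    ring
  have hzero : (j * q % p : ℤ) / p = 0 :=
    Int.ediv_eq_zero_of_lt (Int.emod_nonneg _ hp') (Int.emod_lt_of_pos _ (by exact_mod_cast hp))
  rw [exponent, exponent, hnum, Int.sub_mul_ediv_left _ _ hp', hzero, zero_sub, sub_neg_eq_add]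

end Exponent

theorem w_eq_expWord {p : ℕ} (hp : 0 < p) (q r : ℕ) (m : ℤ) :
    w p q r m = expWord p fun j => m * exponent p q r j := by
  simp only [w, expWord, exponent_natCast hp]

theorem exists_mul_modEq_of_gcd_dvd {p q r : ℕ} (hp : 0 < p) (hr : p.gcd q ∣ r) :
    ∃ k : ℕ, k * q ≡ r [ZMOD p] := by
  obtain ⟨a, b, hab⟩ := Int.gcd_dvd_iff.1 (Int.gcd_natCast_natCast p q ▸ hr)
  obtain ⟨k, -, hk⟩ := Int.existsUnique_equiv_nat b (by exact_mod_cast hp : (0 : ℤ) < p)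
  refine ⟨k, (hk.mul_right q).trans (Int.modEq_iff_dvd.2 ⟨a, ?_⟩)⟩
  rw [hab]
  ring

theorem w_autEquiv_of_modEq {p r r' : ℕ} (hp : 0 < p) (q : ℕ) (m : ℤ) (h : r ≡ r' [ZMOD p]) :
    AutEquiv (w p q r m) (w p q r' m) := by
  obtain ⟨c, hc⟩ := h.dvd
  have hexp (j : ℕ) : m * exponent p q r' j = m * exponent p q r j + m * c := by
    rw [← mul_add, ← exponent_add_mul hp, ← hc, add_sub_cancel]
  simp only [w_eq_expWord hp, hexp]
  exact autEquiv_expWord_add p _ (m * c)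

theorem w_autEquiv_of_modEq_neg {p q r r' : ℕ} (hp : 0 < p) (m : ℤ) (hr : p.gcd q ∣ r)
    (h : r ≡ -r' [ZMOD p]) : AutEquiv (w p q r m) (w p q r' m) := by
  obtain ⟨k, hk⟩ := exists_mul_modEq_of_gcd_dvd hp hr
  obtain ⟨c, hc⟩ : (p : ℤ) ∣ r + r' := by simpa using h.symm.dvd
  have hexp (j : ℕ) : m * exponent p q r' j = m * c - m * exponent p q r (j + k) := by
    rw [exponent_shift hp hk, ← mul_sub, sub_neg_eq_add, add_comm c, ← exponent_add_mul hp, ← hc,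
      neg_add_cancel_left]
  have hperiodic : Function.Periodic (fun j => m * exponent p q r j) p :=
    (exponent_periodic r).comp (m * ·)
  simp only [w_eq_expWord hp, hexp]
  exact (autEquiv_expWord_shift hperiodic k).trans (autEquiv_expWord_sub p _ (m * c))

theorem stmt2_general (p q : ℕ) (m : ℤ) (r r' : ℕ) (hp : 1 ≤ p)
    (hcong : (r : ℤ) ≡ r' [ZMOD p] ∨ p.gcd q ∣ r ∧ (r : ℤ) ≡ -r' [ZMOD p]) :
    ∃ φ : FreeGroup (Fin 2) ≃* FreeGroup (Fin 2), φ (w p q r m) = w p q r' m := by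
  rcases hcong with h | ⟨hr, h⟩
  · exact w_autEquiv_of_modEq hp q m h
  · exact w_autEquiv_of_modEq_neg hp m hr h

/-- If `r ≡ ±r' (mod p)` then `w_{p,q,r,m}` and `w_{p,q,r',m}` are equivalent,
i.e. some automorphism of the free group maps one to the other. -/
theorem stmt2 (p q : ℕ) (m : ℤ) (r r' : ℕ) (hp : 1 ≤ p) (hq : 1 ≤ q)
    (hpq : Nat.Coprime p q)
    (hcong : (r : ℤ) ≡ (r' : ℤ) [ZMOD (p : ℤ)] ∨ (r : ℤ) ≡ -(r' : ℤ) [ZMOD (p : ℤ)]) :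
    ∃ φ : FreeGroup (Fin 2) ≃* FreeGroup (Fin 2), φ (w p q r m) = w p q r' m := by
  have hr : p.gcd q ∣ r := by simp only [hpq.gcd_eq_one, one_dvd]
  exact stmt2_general p q m r r' hp (hcong.imp_right (And.intro hr))
end

section
/- Let p ≥ 2 and q ≥ 1 be coprime integers, let r ≥ 1 be an integer, and let m ≥ 2. Then w_{p,q,r,m} is not a primitive element of the free group F. -/
/-! Killing one member of a basis of the free group leaves a cyclic quotient, so a homomorphism
that sends a primitive element to `1` has cyclic image. Since each of the `p` syllables of
`w p q r m` is a power of `x ^ m` followed by `y`, the word dies in the free product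
`ℤ/m * ℤ/p`, where the images of `x` and `y` do not commute unless one of the factors is trivial. -/

open Monoid (CoprodI)

theorem commute_coprodI_of_iff {ι : Type*} {M : ι → Type*} [∀ i, Monoid (M i)] {i j : ι}
    (hij : i ≠ j) {a : M i} {b : M j} :
    Commute (CoprodI.of a) (CoprodI.of b) ↔ a = 1 ∨ b = 1 := by
  classical
  refine ⟨fun h => ?_, ?_⟩
  · by_contra! hab
    let ab := CoprodI.NeWord.append (.singleton a hab.1) hij (.singleton b hab.2)
    let ba := CoprodI.NeWord.append (.singleton b hab.2) hij.symm (.singleton a hab.1)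
    have hprod : ab.prod = ba.prod := by
      simpa only [ab, ba, CoprodI.NeWord.append_prod, CoprodI.NeWord.prod_singleton] using h.eq
    have hword : ab.toWord = ba.toWord := CoprodI.Word.equiv.symm.injective hprod
    have hhead : some (⟨i, a⟩ : Σ i, M i) = some ⟨j, b⟩ :=
      congrArg (fun u => u.toList.head?) hword
    exact hij (congrArg Sigma.fst (Option.some_injective _ hhead))
  · rintro (rfl | rfl) <;> simp

section FreeProductZMod

variable {ι : Type*} (k : ι → ℤ)

/-- The canonical map from a free group onto the free product of the cyclic groups `ℤ/kᵢ`, sending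
the `i`-th generator to the generator of the `i`-th factor. It is used to detect elements outside
the normal closure of the powers `xᵢ ^ kᵢ`. The factors are written as `ZMod |kᵢ|` so that
the exponents may be arbitrary integers. -/
def toFreeProductZMod : FreeGroup ι →* CoprodI fun i => Multiplicative (ZMod (k i).natAbs) :=
  FreeGroup.lift fun i => CoprodI.of (i := i) (Multiplicative.ofAdd 1)

theorem toFreeProductZMod_of_zpow_self (i : ι) :
    toFreeProductZMod k (FreeGroup.of i ^ k i) = 1 := by
  have hcast : ((k i : ℤ) : ZMod (k i).natAbs) = 0 :=
    (ZMod.intCast_zmod_eq_zero_iff_dvd _ _).mpr (Int.natAbs_dvd.mpr dvd_rfl)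
  rw [toFreeProductZMod, map_zpow, FreeGroup.lift_apply_of, ← map_zpow, ← ofAdd_zsmul, zsmul_one,
    hcast, ofAdd_zero, map_one]

theorem commute_toFreeProductZMod_of_iff {i j : ι} (hij : i ≠ j) :
    Commute (toFreeProductZMod k (.of i)) (toFreeProductZMod k (.of j)) ↔
      IsUnit (k i) ∨ IsUnit (k j) := by
  have hone (l : ι) : (Multiplicative.ofAdd 1 : Multiplicative (ZMod (k l).natAbs)) = 1 ↔
      IsUnit (k l) := by
    rw [ofAdd_eq_one, ZMod.one_eq_zero_iff, Int.isUnit_iff_natAbs_eq]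
  simp only [toFreeProductZMod, FreeGroup.lift_apply_of, commute_coprodI_of_iff hij, hone]

end FreeProductZMod

theorem closure_xx_yy : Subgroup.closure {xx, yy} = ⊤ := by
  have hrange : Set.range FreeGroup.of = {xx, yy} := by
    ext g
    simp [xx, yy, Fin.exists_fin_two, eq_comm]
  rw [← hrange, FreeGroup.closure_range_of]

theorem IsPrimitive.isCyclic_range {G : Type*} [Group G] {g : FreeGroup (Fin 2)}
    (hg : IsPrimitive g) {f : FreeGroup (Fin 2) →* G} (hf : f g = 1) : IsCyclic f.range := by
  obtain ⟨φ, rfl⟩ := hg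
  have hrange : f.range = Subgroup.zpowers (f (φ yy)) :=
    calc f.range = ((⊤ : Subgroup _).map φ.toMonoidHom).map f := by
          rw [Subgroup.map_top_of_surjective _ φ.surjective, MonoidHom.range_eq_map]
      _ = Subgroup.closure {f (φ xx), f (φ yy)} := by
          simp only [← closure_xx_yy, MonoidHom.map_closure, Set.image_pair,
            MulEquiv.toMonoidHom_eq_coe, MonoidHom.coe_coe]
      _ = Subgroup.zpowers (f (φ yy)) := by
          rw [hf, Subgroup.closure_insert_one, Subgroup.zpowers_eq_closure]
  rw [hrange]
  infer_instance

theorem IsPrimitive.notMem_normalClosure {g : FreeGroup (Fin 2)} (hg : IsPrimitive g) {a b : ℤ}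
    (ha : ¬ IsUnit a) (hb : ¬ IsUnit b) : g ∉ Subgroup.normalClosure {xx ^ a, yy ^ b} := by
  intro hmem
  let f := toFreeProductZMod ![a, b]
  have hker : Subgroup.normalClosure {xx ^ a, yy ^ b} ≤ f.ker := by
    refine Subgroup.normalClosure_le_normal (Set.pair_subset ?_ ?_)
    · exact toFreeProductZMod_of_zpow_self ![a, b] 0
    · exact toFreeProductZMod_of_zpow_self ![a, b] 1
  have : IsCyclic f.range := hg.isCyclic_range (hker hmem)
  have hcomm : Commute (f xx) (f yy) :=
    congrArg Subtype.val (mul_comm' (f.rangeRestrict xx) (f.rangeRestrict yy))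
  exact ((commute_toFreeProductZMod_of_iff ![a, b] Fin.zero_ne_one).mp hcomm).elim ha hb

theorem w_mem_normalClosure (p q r : ℕ) (m : ℤ) :
    w p q r m ∈ Subgroup.normalClosure {xx ^ m, yy ^ (p : ℤ)} := by
  set N := Subgroup.normalClosure {xx ^ m, yy ^ (p : ℤ)}
  have hx : QuotientGroup.mk' N xx ^ m = 1 := by
    rw [← map_zpow]
    exact (QuotientGroup.eq_one_iff _).mpr (Subgroup.subset_normalClosure (.inl rfl))
  have hy : QuotientGroup.mk' N yy ^ p = 1 := by
    rw [← zpow_natCast, ← map_zpow]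
    exact (QuotientGroup.eq_one_iff _).mpr (Subgroup.subset_normalClosure (.inr rfl))
  have hsyllable (e : ℤ) : QuotientGroup.mk' N (xx ^ (m * e) * yy) = QuotientGroup.mk' N yy := by
    rw [map_mul, map_zpow, zpow_mul, hx, one_zpow, one_mul]
  rw [← QuotientGroup.ker_mk' N, MonoidHom.mem_ker]
  simp only [w, map_list_prod, List.map_map, Function.comp_def, hsyllable, List.map_const',
    List.prod_replicate, List.length_range, hy]

theorem stmt3_general (p q r : ℕ) (m : ℤ) (hp : 2 ≤ p) (hm : ¬ IsUnit m) :
    ¬ IsPrimitive (w p q r m) := fun hw =>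
  have hp' : ¬ IsUnit (p : ℤ) := by rw [Int.ofNat_isUnit, Nat.isUnit_iff]; lia
  hw.notMem_normalClosure hm hp' (w_mem_normalClosure p q r m)

/-- For `p ≥ 2`, `q ≥ 1` coprime, `r ≥ 1`, and `m ≥ 2`, the word
`w_{p,q,r,m}` is not primitive. -/
theorem stmt3 (p q r : ℕ) (m : ℤ) (hp : 2 ≤ p) (hq : 1 ≤ q)
    (hpq : Nat.Coprime p q) (hr : 1 ≤ r) (hm : 2 ≤ m) :
    ¬ IsPrimitive (w p q r m) :=
  stmt3_general p q r m hp (by rw [Int.isUnit_iff]; lia)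
end

section
/- Let p and q be coprime integers with 1 < q < p/2, and let r be an integer with q < r < p − q. Then w_{p,q,r,1} is not a primitive element of the free group F. -/
/-! Suppose a positive word `W` in two elements `a`, `b` of a free group is primitive, and let `ψ`
be a homomorphism to `ℤ` with `ψ W = 0` and `ψ a ≠ 0`. Some `ψ`-twisted derivation `D` into
`ℤ[T;T⁻¹]` takes the value `1` on `W`, so the Fox derivatives `P`, `Q` of `W` with respect to `a`,
`b` satisfy `P * D a + Q * D b = 1`. The fundamental formula of Fox calculus gives
`P * (T ^ ψ a - 1) + Q * (T ^ ψ b - 1) = 0`. Hence `P ∣ T ^ ψ b - 1` and `Q ∣ T ^ ψ a - 1`. If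
`aa` occurs in `W`, the exponents occurring in `P` spread over at least `|ψ a|`, whence
`|ψ a| ≤ |ψ b|`; if also `bb` occurs, then `|ψ a| = |ψ b|`. Since `ψ W = 0`, the letters `a` and
`b` then occur equally often, at least twice, so `W` is a proper power modulo commutators, which a
primitive element is not. -/

open LaurentPolynomial

section TwistedDerivation

variable {G R : Type*} [Monoid G] [Ring R]

/-- `D` is a derivation (crossed homomorphism) from `G` to the ring `R`, on which `G` acts by left
multiplication through `χ`. -/
def IsTwistedDerivation (χ : G →* R) (D : G → R) : Prop :=
  ∀ g h, D (g * h) = D g + χ g * D h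

theorem isTwistedDerivation_sub_one (χ : G →* R) :
    IsTwistedDerivation χ fun g => χ g - 1 := by
  intro g h
  simp only [map_mul, mul_sub, mul_one, sub_add_sub_cancel']

protected theorem IsTwistedDerivation.map_one {χ : G →* R} {D : G → R}
    (hD : IsTwistedDerivation χ D) : D 1 = 0 := by
  simpa using hD 1 1

theorem exists_isTwistedDerivation_of {α : Type*} (χ : FreeGroup α →* R) (c : α → R) :
    ∃ D, IsTwistedDerivation χ D ∧ ∀ i, D (FreeGroup.of i) = c i := by
  let act : Rˣ →* MulAut (Multiplicative R) :=
    (MulAutMultiplicative R).symm.toMonoidHom.comp AddAut.mulLeft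
  -- A crossed homomorphism is the left component of a lift of `χ` to the semidirect product.
  let Φ : FreeGroup α →* Multiplicative R ⋊[act] Rˣ :=
    FreeGroup.lift fun i => ⟨Multiplicative.ofAdd (c i), χ.toHomUnits (FreeGroup.of i)⟩
  have hΦ : SemidirectProduct.rightHom.comp Φ = χ.toHomUnits :=
    FreeGroup.ext_hom _ _ fun i => by simp [Φ]
  refine ⟨fun g => (Φ g).left.toAdd, fun g h => ?_, fun i => by simp [Φ]⟩
  have hright : ((Φ g).right : R) = χ g := congrArg Units.val (DFunLike.congr_fun hΦ g)
  simp only [map_mul, SemidirectProduct.mul_left, toAdd_mul, ← hright]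
  rfl

theorem IsPrimitive.exists_isTwistedDerivation {g : FreeGroup (Fin 2)} (hg : IsPrimitive g)
    (χ : FreeGroup (Fin 2) →* R) : ∃ D, IsTwistedDerivation χ D ∧ D g = 1 := by
  obtain ⟨φ, rfl⟩ := hg
  obtain ⟨D, hD, hDx⟩ := exists_isTwistedDerivation_of (χ.comp φ.toMonoidHom) fun _ => 1
  exact ⟨D ∘ φ.symm, fun g h => by simp [hD _ _], by simpa [xx] using hDx 0⟩

end TwistedDerivation

theorem IsPrimitive.exists_hom_eq_ofAdd_one {g : FreeGroup (Fin 2)} (hg : IsPrimitive g) :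
    ∃ ψ : FreeGroup (Fin 2) →* Multiplicative ℤ, ψ g = Multiplicative.ofAdd 1 := by
  obtain ⟨φ, rfl⟩ := hg
  exact ⟨(FreeGroup.lift fun _ => Multiplicative.ofAdd 1).comp φ.symm.toMonoidHom, by simp [xx]⟩

theorem IsPrimitive.eq_one_of_pow {g : FreeGroup (Fin 2)} {n : ℕ} (h : IsPrimitive (g ^ n)) :
    n = 1 := by
  obtain ⟨ψ, hψ⟩ := h.exists_hom_eq_ofAdd_one
  have hn : (n : ℤ) * (ψ g).toAdd = 1 := by
    simpa using congrArg Multiplicative.toAdd hψ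
  exact_mod_cast Int.eq_one_of_mul_eq_one_right n.cast_nonneg hn

section TwoLetterWord

variable {G : Type*} [Monoid G] (s : ℕ → Prop) [DecidablePred s] (a b : G)

/-- The positive word of length `n` in `a` and `b` whose `j`-th letter, counting from `0`, is `a`
exactly when `s j` holds. -/
def twoLetterWord (n : ℕ) : G :=
  ((List.range n).map fun j => if s j then a else b).prod

theorem twoLetterWord_zero : twoLetterWord s a b 0 = 1 := rfl

theorem twoLetterWord_succ (n : ℕ) :
    twoLetterWord s a b (n + 1) = twoLetterWord s a b n * if s n then a else b := by
  simp [twoLetterWord, List.range_succ]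

theorem twoLetterWord_not (n : ℕ) :
    twoLetterWord (fun j => ¬ s j) b a n = twoLetterWord s a b n := by
  simp only [twoLetterWord, ite_not]

theorem twoLetterWord_self (n : ℕ) : twoLetterWord s a a n = a ^ n := by
  simp [twoLetterWord]

theorem map_twoLetterWord {M : Type*} [CommMonoid M] (ψ : G →* M) (n : ℕ) :
    ψ (twoLetterWord s a b n) = ψ a ^ n.count s * ψ b ^ n.count (fun j => ¬ s j) := by
  induction n with
  | zero => simp [twoLetterWord_zero]
  | succ n ih =>
    rw [twoLetterWord_succ, map_mul, ih, Nat.count_succ, Nat.count_succ]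
    by_cases hn : s n <;> simp [hn, pow_succ, mul_assoc, mul_left_comm, mul_comm]

theorem toAdd_twoLetterWord (ψ : G →* Multiplicative ℤ) (n : ℕ) :
    (ψ (twoLetterWord s a b n)).toAdd =
      n.count s * (ψ a).toAdd + n.count (fun j => ¬ s j) * (ψ b).toAdd := by
  simp [map_twoLetterWord]

/-- The image under `χ` of the Fox derivative of `twoLetterWord s a b n` with respect to the letter
`a`. The derivative with respect to `b` is obtained by exchanging the two letters. -/
def letterDeriv {R : Type*} [Ring R] (χ : G →* R) (n : ℕ) : R :=
  ∑ j ∈ Finset.range n with s j, χ (twoLetterWord s a b j)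

theorem letterDeriv_succ {R : Type*} [Ring R] (χ : G →* R) (n : ℕ) :
    letterDeriv s a b χ (n + 1) =
      letterDeriv s a b χ n + if s n then χ (twoLetterWord s a b n) else 0 := by
  simp only [letterDeriv, Finset.sum_filter, Finset.sum_range_succ]

variable {s a b}

theorem IsTwistedDerivation.map_twoLetterWord {R : Type*} [Ring R] {χ : G →* R} {D : G → R}
    (hD : IsTwistedDerivation χ D) (n : ℕ) :
    D (twoLetterWord s a b n) =
      letterDeriv s a b χ n * D a + letterDeriv (fun j => ¬ s j) b a χ n * D b := by
  induction n with
  | zero => simp [twoLetterWord_zero, hD.map_one, letterDeriv]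
  | succ n ih =>
    rw [twoLetterWord_succ, hD, ih]
    by_cases hn : s n <;>
      simp [letterDeriv_succ, hn, twoLetterWord_not, add_mul, add_assoc, add_left_comm, add_comm]

theorem IsTwistedDerivation.letterDeriv_dvd {R : Type*} [CommRing R] {χ : G →* R} {D : G → R}
    (hD : IsTwistedDerivation χ D) {n : ℕ} (hχ : χ (twoLetterWord s a b n) = 1)
    (hDw : D (twoLetterWord s a b n) = 1) : letterDeriv s a b χ n ∣ χ b - 1 := by
  have hfund := (isTwistedDerivation_sub_one χ).map_twoLetterWord (s := s) (a := a) (b := b) n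
  rw [hχ, sub_self] at hfund
  rw [hD.map_twoLetterWord] at hDw
  exact ⟨D a * (χ b - 1) - D b * (χ a - 1), by
    linear_combination -(χ b - 1) * hDw - D b * hfund⟩

end TwoLetterWord

theorem abs_sub_le_of_support_mul_subset_Icc {R A : Type*} [Semiring R] [NoZeroDivisors R]
    [AddCommGroup A] [LinearOrder A] [IsOrderedAddMonoid A] {f g : AddMonoidAlgebra R A}
    (hg : g ≠ 0) {u v : A} (hfg : ((f * g).coeff.support : Set A) ⊆ Set.Icc u v) {m n : A}
    (hm : m ∈ f.coeff.support) (hn : n ∈ f.coeff.support) : |m - n| ≤ v - u := by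
  have hF : f.coeff.support.Nonempty := ⟨m, hm⟩
  have hG : g.coeff.support.Nonempty := by simpa using hg
  have mem_Icc : ∀ a ∈ f.coeff.support, ∀ b ∈ g.coeff.support,
      UniqueAdd f.coeff.support g.coeff.support a b → a + b ∈ Set.Icc u v := by
    intro a ha b hb hab
    apply hfg
    rw [Finset.mem_coe, Finsupp.mem_support_iff, AddMonoidAlgebra.coeff_mul_add_of_uniqueAdd hab]
    exact mul_ne_zero (Finsupp.mem_support_iff.1 ha) (Finsupp.mem_support_iff.1 hb)
  have hmax := mem_Icc _ (Finset.max'_mem _ hF) _ (Finset.max'_mem _ hG) fun x y hx hy h =>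
    (add_eq_add_iff_eq_and_eq (Finset.le_max' _ x hx) (Finset.le_max' _ y hy)).1 h
  have hmin := mem_Icc _ (Finset.min'_mem _ hF) _ (Finset.min'_mem _ hG) fun x y hx hy h =>
    ((add_eq_add_iff_eq_and_eq (Finset.min'_le _ x hx) (Finset.min'_le _ y hy)).1 h.symm).imp
      Eq.symm Eq.symm
  have hFmn : |m - n| ≤ f.coeff.support.max' hF - f.coeff.support.min' hF :=
    abs_sub_le_iff.2 ⟨sub_le_sub (Finset.le_max' _ _ hm) (Finset.min'_le _ _ hn),
      sub_le_sub (Finset.le_max' _ _ hn) (Finset.min'_le _ _ hm)⟩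
  have hGle : g.coeff.support.min' hG ≤ g.coeff.support.max' hG := Finset.min'_le_max' _ hG
  calc |m - n| ≤ f.coeff.support.max' hF - f.coeff.support.min' hF := hFmn
    _ ≤ (f.coeff.support.max' hF - f.coeff.support.min' hF) +
        (g.coeff.support.max' hG - g.coeff.support.min' hG) :=
      le_add_of_nonneg_right (sub_nonneg.2 hGle)
    _ = (f.coeff.support.max' hF + g.coeff.support.max' hG) -
        (f.coeff.support.min' hF + g.coeff.support.min' hG) := add_sub_add_comm .. |>.symm
    _ ≤ v - u := sub_le_sub hmax.2 hmin.1

theorem abs_sub_le_abs_of_dvd_T_sub_one {R : Type*} [Ring R] [IsDomain R] {f : R[T;T⁻¹]}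
    {d : ℤ} (hd : d ≠ 0) (hf : f ∣ T d - 1) {m n : ℤ} (hm : m ∈ f.coeff.support)
    (hn : n ∈ f.coeff.support) : |m - n| ≤ |d| := by
  obtain ⟨g, hg⟩ := hf
  have hcoeff (k : ℤ) : (T d - 1 : R[T;T⁻¹]).coeff k =
      (if d = k then 1 else 0) - if 0 = k then 1 else 0 := by
    rw [← T_zero, AddMonoidAlgebra.coeff_sub, Finsupp.sub_apply, T_apply, T_apply]
  have hg0 : g ≠ 0 := by
    rintro rfl
    have hd1 := hcoeff d
    simp [hg, hd.symm] at hd1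
  have hsupp : ((f * g).coeff.support : Set ℤ) ⊆ Set.Icc (min d 0) (max d 0) := by
    intro k hk
    rw [Finset.mem_coe, Finsupp.mem_support_iff, ← hg, hcoeff] at hk
    grind
  calc |m - n| ≤ max d 0 - min d 0 := abs_sub_le_of_support_mul_subset_Icc hg0 hsupp hm hn
    _ = |d| := by rw [max_sub_min_eq_abs', sub_zero]

section Degree

variable {G : Type*} [Monoid G] {s : ℕ → Prop} [DecidablePred s] {a b : G}

theorem toAdd_mem_support_letterDeriv (ψ : G →* Multiplicative ℤ) {n j : ℕ} (hjn : j < n)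
    (hj : s j) : (ψ (twoLetterWord s a b j)).toAdd ∈
      (letterDeriv s a b ((AddMonoidAlgebra.of ℤ ℤ).comp ψ) n).coeff.support := by
  rw [letterDeriv, Finsupp.mem_support_iff, AddMonoidAlgebra.coeff_sum, Finsupp.finsetSum_apply]
  refine (Finset.sum_pos' (fun i _ => ?_) ⟨j, by simp [hjn, hj], by simp⟩).ne'
  rw [MonoidHom.comp_apply, AddMonoidAlgebra.of_apply, AddMonoidAlgebra.coeff_single,
    Finsupp.single_apply]
  split_ifs <;> simp

theorem IsTwistedDerivation.abs_toAdd_le {ψ : G →* Multiplicative ℤ} {D : G → ℤ[T;T⁻¹]}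
    (hD : IsTwistedDerivation ((AddMonoidAlgebra.of ℤ ℤ).comp ψ) D) {n : ℕ}
    (hψ : ψ (twoLetterWord s a b n) = 1) (hDw : D (twoLetterWord s a b n) = 1) (hb : ψ b ≠ 1)
    {i : ℕ} (hin : i + 1 < n) (hi : s i) (hi' : s (i + 1)) :
    |(ψ a).toAdd| ≤ |(ψ b).toAdd| := by
  have hdvd := hD.letterDeriv_dvd (by rw [MonoidHom.comp_apply, hψ, map_one]) hDw
  have hwidth := abs_sub_le_abs_of_dvd_T_sub_one (mt toAdd_eq_zero.1 hb) hdvd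
    (toAdd_mem_support_letterDeriv ψ hin hi') (toAdd_mem_support_letterDeriv ψ (by omega) hi)
  simpa [twoLetterWord_succ, hi] using hwidth

end Degree

theorem IsPrimitive.count_eq_count_not {s : ℕ → Prop} [DecidablePred s] {a b : FreeGroup (Fin 2)}
    {n : ℕ} (hw : IsPrimitive (twoLetterWord s a b n))
    {ψ : FreeGroup (Fin 2) →* Multiplicative ℤ} (hψ : ψ (twoLetterWord s a b n) = 1) (ha : ψ a ≠ 1)
    {i j : ℕ} (hin : i + 1 < n) (hi : s i) (hi' : s (i + 1))
    (hjn : j + 1 < n) (hj : ¬ s j) (hj' : ¬ s (j + 1)) :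
    n.count s = n.count fun k => ¬ s k := by
  have hdeg := toAdd_twoLetterWord s a b ψ n
  rw [hψ, toAdd_one] at hdeg
  have ha0 : (ψ a).toAdd ≠ 0 := mt toAdd_eq_zero.1 ha
  have hb : ψ b ≠ 1 := by
    intro hb
    rw [hb, toAdd_one, mul_zero, add_zero, eq_comm, mul_eq_zero, Nat.cast_eq_zero] at hdeg
    exact Nat.count_iff_forall_not.1 (hdeg.resolve_right ha0) i (by omega) hi
  obtain ⟨D, hD, hDw⟩ := hw.exists_isTwistedDerivation ((AddMonoidAlgebra.of ℤ ℤ).comp ψ)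
  have hab : |(ψ a).toAdd| ≤ |(ψ b).toAdd| := hD.abs_toAdd_le hψ hDw hb hin hi hi'
  have hba : |(ψ b).toAdd| ≤ |(ψ a).toAdd| := by
    rw [← twoLetterWord_not] at hψ hDw
    exact hD.abs_toAdd_le hψ hDw ha hjn hj hj'
  have habs : (n.count s : ℤ) * |(ψ a).toAdd| = n.count (fun k => ¬ s k) * |(ψ a).toAdd| := by
    nth_rw 2 [hab.antisymm hba]
    rw [← Nat.abs_cast, ← Nat.abs_cast (n.count fun k => ¬ s k), ← abs_mul, ← abs_mul,
      eq_neg_of_add_eq_zero_left hdeg.symm, abs_neg]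
  exact_mod_cast mul_right_cancel₀ (abs_ne_zero.2 ha0) habs

theorem not_isPrimitive_twoLetterWord {s : ℕ → Prop} [DecidablePred s] {a b : FreeGroup (Fin 2)}
    {n : ℕ} {ψ : FreeGroup (Fin 2) →* Multiplicative ℤ}
    (hψ : ψ (twoLetterWord s a b n) = 1) (ha : ψ a ≠ 1)
    {i j : ℕ} (hin : i + 1 < n) (hi : s i) (hi' : s (i + 1))
    (hjn : j + 1 < n) (hj : ¬ s j) (hj' : ¬ s (j + 1)) :
    ¬ IsPrimitive (twoLetterWord s a b n) := by
  intro hw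
  obtain ⟨θ, hθ⟩ := hw.exists_hom_eq_ofAdd_one
  have hdeg := toAdd_twoLetterWord s a b θ n
  rw [hθ, toAdd_ofAdd, ← hw.count_eq_count_not hψ ha hin hi hi' hjn hj hj', ← mul_add] at hdeg
  have hcount_one := Int.eq_one_of_mul_eq_one_right (Nat.cast_nonneg _) hdeg.symm
  have hcount_lt : (i + 1).count s < n.count s := Nat.count_strict_mono hi' hin
  have hcount_pos : i.count s < (i + 1).count s := Nat.count_strict_mono hi i.lt_succ_self
  omega

section MulMod

variable {p q : ℕ}

theorem injOn_mul_mod (hpq : p.Coprime q) :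
    Set.InjOn (fun j => j * q % p) (Finset.range p) := fun _ hi _ hj hij =>
  (Nat.ModEq.cancel_right_of_coprime hpq hij).eq_of_lt_of_lt (Finset.mem_range.1 hi)
    (Finset.mem_range.1 hj)

theorem image_range_mul_mod (hpq : p.Coprime q) :
    (Finset.range p).image (fun j => j * q % p) = Finset.range p := by
  refine Finset.eq_of_subset_of_card_le (Finset.image_subset_iff.2 fun j hj => ?_)
    (Finset.card_image_of_injOn (injOn_mul_mod hpq)).ge
  exact Finset.mem_range.2 (Nat.mod_lt _ (j.zero_le.trans_lt (Finset.mem_range.1 hj)))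

theorem exists_mul_mod_eq (hpq : p.Coprime q) {k : ℕ} (hk : k < p) : ∃ j < p, j * q % p = k := by
  rw [← Finset.mem_range, ← image_range_mul_mod hpq] at hk
  simpa using hk

theorem count_mul_mod (hpq : p.Coprime q) (t : ℕ → Prop) [DecidablePred t] :
    p.count (fun j => t (j * q % p)) = p.count t := by
  rw [Nat.count_eq_card_filter_range, Nat.count_eq_card_filter_range]
  conv_rhs => rw [← image_range_mul_mod hpq, Finset.filter_image]
  exact (Finset.card_image_of_injOn
    ((injOn_mul_mod hpq).mono (Finset.filter_subset _ _))).symm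

theorem count_lt_eq_min (k n : ℕ) : n.count (· < k) = min n k := by
  induction n with
  | zero => simp
  | succ n ih => grind

theorem count_not_lt_eq_sub (k n : ℕ) : n.count (¬ · < k) = n - k := by
  induction n with
  | zero => simp
  | succ n ih => grind

end MulMod

theorem w_eq_twoLetterWord (p q r : ℕ) (m : ℤ) :
    w p q r m = twoLetterWord (fun j => j * q % p < r % p)
      (xx ^ (m * ((r / p : ℕ) + 1)) * yy) (xx ^ (m * (r / p : ℕ)) * yy) p := by
  unfold w twoLetterWord
  congr 2
  funext j
  split_ifs <;> simp

theorem exists_hom_w_eq_one {p q : ℕ} (hpq : p.Coprime q) (hp : 0 < p) (r : ℕ) (m : ℤ) :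
    ∃ ψ : FreeGroup (Fin 2) →* Multiplicative ℤ, ψ (w p q r m) = 1 ∧
      (ψ (xx ^ (m * ((r / p : ℕ) + 1)) * yy)).toAdd = m * (p - (r % p : ℕ)) := by
  have hdiv : (p : ℤ) * (r / p : ℕ) + (r % p : ℕ) = r := mod_cast Nat.div_add_mod r p
  have hle : r % p ≤ p := (Nat.mod_lt r hp).le
  let ψ : FreeGroup (Fin 2) →* Multiplicative ℤ :=
    FreeGroup.lift ![Multiplicative.ofAdd (p : ℤ), Multiplicative.ofAdd (-(m * r))]
  have hψ (k : ℤ) : (ψ (xx ^ k * yy)).toAdd = k * p - m * r := by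
    simp [ψ, xx, yy, sub_eq_add_neg, mul_comm]
  refine ⟨ψ, toAdd_eq_zero.1 ?_, ?_⟩
  · rw [w_eq_twoLetterWord, toAdd_twoLetterWord, count_mul_mod hpq (· < r % p),
      count_mul_mod hpq (¬ · < r % p), count_lt_eq_min, count_not_lt_eq_sub, min_eq_right hle,
      Nat.cast_sub hle, hψ, hψ]
    linear_combination (m * p : ℤ) * hdiv
  · rw [hψ]
    linear_combination m * hdiv

theorem stmt5_general {p q r : ℕ} (hpq : p.Coprime q) (hqr : q < r % p) (hrq : r % p + q < p)
    (m : ℤ) : ¬ IsPrimitive (w p q r m) := by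
  have hmod : q % p = q := Nat.mod_eq_of_lt (by omega)
  obtain rfl | hm := eq_or_ne m 0
  · intro hw
    rw [w_eq_twoLetterWord, zero_mul, zero_mul, twoLetterWord_self] at hw
    have := hw.eq_one_of_pow
    omega
  obtain ⟨ψ, hψ, hψa⟩ := exists_hom_w_eq_one hpq (by omega) r m
  obtain ⟨j, hjp, hj⟩ := exists_mul_mod_eq hpq (show r % p < p by omega)
  have hj' : (j + 1) * q % p = r % p + q := by
    rw [add_one_mul, Nat.add_mod, hj, hmod, Nat.mod_eq_of_lt hrq]
  have hjp' : j + 1 ≠ p := by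
    rintro rfl
    rw [Nat.mul_mod_right] at hj'
    omega
  have ha : ψ (xx ^ (m * ((r / p : ℕ) + 1)) * yy) ≠ 1 := by
    have hne : m * (p - (r % p : ℕ)) ≠ 0 := mul_ne_zero hm (by omega)
    exact fun h => hne (by rw [← hψa, h, toAdd_one])
  rw [w_eq_twoLetterWord] at hψ ⊢
  -- The word begins with `aa`, and `bb` occurs where `j * q % p` passes from `r̄` to `r̄ + q`.
  exact not_isPrimitive_twoLetterWord hψ ha (i := 0) (j := j) (by omega)
    (by simpa using q.zero_le.trans_lt hqr) (by simpa [hmod] using hqr)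
    (by omega) (by simp [hj]) (by simp [hj'])

/-- For coprime `p, q` with `1 < q < p/2` and `q < r < p - q`, the word
`w_{p,q,r,1}` is not primitive. -/
theorem stmt5 (p q r : ℕ) (hpq : Nat.Coprime p q)
    (hq1 : 1 < q) (hq2 : 2 * q < p) (hr1 : q < r) (hr2 : r < p - q) :
    ¬ IsPrimitive (w p q r 1) := by
  have hr : r % p = r := Nat.mod_eq_of_lt (by omega)
  exact stmt5_general hpq (by omega) (by omega) 1
end

section
/- Let p ≥ 1 and q ≥ 1 be coprime integers, r ≥ 1 an integer, and m ≥ 1. If w_{p,q,r,1} is a primitive element of the free group F, then w_{p,q,r,m} is (m,p) Seifert-fibered; that is, the quotient of F by the normal closure of w_{p,q,r,m} is isomorphic to G_{m,p} = ⟨x, y | x^m y^p⟩. -/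
/-!
Let `φ` be an automorphism of the free group with `φ x = g`, and let `N` be the quotient by the
normal closure of `g`. It is infinite cyclic, generated by the image `t` of `φ y`, and the images
of `x` and `y` in it are `t ^ a` and `t ^ b`. Substituting `x ^ m` for `x` in `g` adjoins to `N` an
`m`-th root of `t ^ a`, so the quotient by the normal closure of the new word is
`⟨x, t | x ^ m = t ^ a⟩`. Finally, `a` is an off-diagonal entry of the matrix of `φ⁻¹` on
abelianizations, hence up to sign the same entry of its inverse, which is the exponent sum of `y`
in `g`; for `g = w_{p,q,r,1}` this is `p`.
-/

section ExponentSum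

variable {α β γ : Type*}

/-- The exponent sum of the generator `i` in a word. It takes values in `Multiplicative ℤ` so that
it is a group homomorphism. -/
def exponentSum [DecidableEq α] (i : α) : FreeGroup α →* Multiplicative ℤ :=
  FreeGroup.lift (Pi.mulSingle i (Multiplicative.ofAdd 1))

lemma toAdd_exponentSum_of [DecidableEq α] (i j : α) :
    (exponentSum i (FreeGroup.of j)).toAdd = (1 : Matrix α α ℤ) i j := by
  simp [exponentSum, Matrix.one_apply, Pi.mulSingle_apply, apply_ite, eq_comm]

lemma apply_eq_prod_zpow_exponentSum [DecidableEq α] [Fintype α] {A : Type*} [CommGroup A]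
    (f : FreeGroup α →* A) (g : FreeGroup α) :
    f g = ∏ j, f (FreeGroup.of j) ^ (exponentSum j g).toAdd := by
  have hf : f = ∏ j, (zpowersHom A (f (FreeGroup.of j))).comp (exponentSum j) :=
    FreeGroup.ext_hom _ _ fun i => by
      simp [MonoidHom.finsetProd_apply, zpowersHom_apply, toAdd_exponentSum_of, Matrix.one_apply,
        apply_ite]
  simpa [MonoidHom.finsetProd_apply, zpowersHom_apply] using DFunLike.congr_fun hf g

/-- The matrix of the map induced on abelianizations by a homomorphism of free groups: its
`j`-th column lists the exponent sums of the image of the `j`-th generator. -/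
def exponentMatrix [DecidableEq β] (φ : FreeGroup α →* FreeGroup β) : Matrix β α ℤ :=
  Matrix.of fun i j => (exponentSum i (φ (FreeGroup.of j))).toAdd

lemma exponentMatrix_id [DecidableEq α] : exponentMatrix (MonoidHom.id (FreeGroup α)) = 1 :=
  Matrix.ext toAdd_exponentSum_of

lemma exponentMatrix_comp [DecidableEq β] [DecidableEq γ] [Fintype β]
    (ψ : FreeGroup β →* FreeGroup γ) (φ : FreeGroup α →* FreeGroup β) :
    exponentMatrix (ψ.comp φ) = exponentMatrix ψ * exponentMatrix φ := by
  ext i j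
  have h := apply_eq_prod_zpow_exponentSum ((exponentSum i).comp ψ) (φ (FreeGroup.of j))
  simpa [exponentMatrix, Matrix.mul_apply, mul_comm] using congrArg Multiplicative.toAdd h

lemma exponentMatrix_mul_exponentMatrix_symm [DecidableEq α] [DecidableEq β] [Fintype α]
    (φ : FreeGroup α ≃* FreeGroup β) :
    exponentMatrix φ.toMonoidHom * exponentMatrix φ.symm.toMonoidHom = 1 := by
  rw [← exponentMatrix_comp, ← exponentMatrix_id]
  congr 1
  exact φ.coe_monoidHom_comp_coe_monoidHom_symm

lemma apply_eq_zpow_of_apply_of_eq_zpow {H : Type*} [Group H] {f : FreeGroup α →* H}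
    {χ : FreeGroup α →* Multiplicative ℤ} {t : H}
    (h : ∀ i, f (FreeGroup.of i) = t ^ (χ (FreeGroup.of i)).toAdd) (g : FreeGroup α) :
    f g = t ^ (χ g).toAdd :=
  DFunLike.congr_fun (FreeGroup.ext_hom f ((zpowersHom H t).comp χ) h) g

end ExponentSum

lemma associated_apply_of_mul_eq_one {R : Type*} [CommRing R] {A B : Matrix (Fin 2) (Fin 2) R}
    (h : A * B = 1) {i j : Fin 2} (hij : i ≠ j) : Associated (A i j) (B i j) := by
  have hdet : A.det * B.det = 1 := by rw [← Matrix.det_mul, h, Matrix.det_one]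
  have hB : B.det • A.adjugate = B := calc
    B.det • A.adjugate = B.det • (A.adjugate * A * B) := by rw [mul_assoc, h, mul_one]
    _ = (A.det * B.det) • B := by
      rw [Matrix.adjugate_mul, smul_mul_assoc, one_mul, smul_smul, mul_comm]
    _ = B := by rw [hdet, one_smul]
  have hadj : A.adjugate i j = -A i j := by
    rw [Matrix.adjugate_fin_two]
    fin_cases i <;> fin_cases j <;> simp_all
  refine ⟨-⟨B.det, A.det, (mul_comm _ _).trans hdet, hdet⟩, ?_⟩
  calc A i j * -B.det = B.det * A.adjugate i j := by rw [hadj]; ring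
    _ = B i j := congrFun₂ hB i j

section Substitution

variable {H : Type*} [Group H]

lemma lift_xx (f : Fin 2 → H) : FreeGroup.lift f xx = f 0 := FreeGroup.lift_apply_of

lemma lift_yy (f : Fin 2 → H) : FreeGroup.lift f yy = f 1 := FreeGroup.lift_apply_of

/-- The substitution `x ↦ x ^ m` in words in `x` and `y`; it turns `w p q r 1` into
`w p q r m`. -/
def powX (m : ℤ) : FreeGroup (Fin 2) →* FreeGroup (Fin 2) :=
  FreeGroup.lift ![xx ^ m, yy]

lemma powX_xx (m : ℤ) : powX m xx = xx ^ m := lift_xx _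

lemma powX_yy (m : ℤ) : powX m yy = yy := lift_yy _

lemma powX_w (p q r : ℕ) (m : ℤ) : powX m (w p q r 1) = w p q r m := by
  simp only [w, map_list_prod, List.map_map, Function.comp_def, map_mul, map_zpow, powX_xx,
    powX_yy, one_mul, zpow_mul]

lemma exponentSum_one_w (p q r : ℕ) (m : ℤ) :
    exponentSum 1 (w p q r m) = Multiplicative.ofAdd (p : ℤ) := by
  have hx : exponentSum 1 xx = 1 := by simp [exponentSum, lift_xx]
  have hy : exponentSum 1 yy = Multiplicative.ofAdd 1 := by simp [exponentSum, lift_yy]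
  simp only [w, map_list_prod, List.map_map, Function.comp_def, map_mul, map_zpow, hx, hy,
    one_zpow, one_mul, List.map_const', List.prod_replicate, List.length_range, ← ofAdd_nsmul,
    nsmul_one]

variable (φ : FreeGroup (Fin 2) ≃* FreeGroup (Fin 2))

/-- The exponent sum of `φ y` in a word rewritten in the basis `φ x`, `φ y`. It identifies the
quotient of the free group by the normal closure of `φ x` with `ℤ`. -/
def coordY : FreeGroup (Fin 2) →* Multiplicative ℤ :=
  (exponentSum 1).comp φ.symm.toMonoidHom

lemma coordY_map_xx : coordY φ (φ xx) = 1 := by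
  simp [coordY, exponentSum, lift_xx]

lemma coordY_map_yy : coordY φ (φ yy) = Multiplicative.ofAdd 1 := by
  simp [coordY, exponentSum, lift_yy]

lemma associated_exponentSum_coordY :
    Associated (exponentSum 1 (φ xx)).toAdd (coordY φ xx).toAdd :=
  associated_apply_of_mul_eq_one (exponentMatrix_mul_exponentMatrix_symm φ) one_ne_zero

lemma apply_eq_zpow_coordY_of_map_xx_eq_one {f : FreeGroup (Fin 2) →* H} (hf : f (φ xx) = 1)
    (g : FreeGroup (Fin 2)) : f g = f (φ yy) ^ (coordY φ g).toAdd := by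
  have hx : f (φ xx) = f (φ yy) ^ (coordY φ (φ xx)).toAdd := by simp [hf, coordY_map_xx]
  have hy : f (φ yy) = f (φ yy) ^ (coordY φ (φ yy)).toAdd := by simp [coordY_map_yy]
  simpa using apply_eq_zpow_of_apply_of_eq_zpow (f := f.comp φ.toMonoidHom)
    (χ := (coordY φ).comp φ.toMonoidHom) (Fin.forall_fin_two.2 ⟨hx, hy⟩) (φ.symm g)

lemma lift_powX_eq_zpow_coordY {m : ℤ} {s t : H} (hst : s ^ m = t ^ (coordY φ xx).toAdd)
    (g : FreeGroup (Fin 2)) :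
    FreeGroup.lift ![s, t ^ (coordY φ yy).toAdd] (powX m g) = t ^ (coordY φ g).toAdd := by
  let f : FreeGroup (Fin 2) →* H := (FreeGroup.lift ![s, t ^ (coordY φ yy).toAdd]).comp (powX m)
  have hx : f xx = t ^ (coordY φ xx).toAdd := by simp [f, powX_xx, lift_xx, hst]
  have hy : f yy = t ^ (coordY φ yy).toAdd := by simp [f, powX_yy, lift_yy]
  exact apply_eq_zpow_of_apply_of_eq_zpow (f := f) (Fin.forall_fin_two.2 ⟨hx, hy⟩) g

end Substitution

lemma Gg.of_zero_zpow_mul_of_one_zpow (a b : ℤ) :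
    (PresentedGroup.of 0 : Gg a b) ^ a * PresentedGroup.of 1 ^ b = 1 :=
  PresentedGroup.one_of_mem rfl

/-- The homomorphism `G_{a,b} → H` sending `x` to `s` and `y` to `t`. -/
def Gg.lift {H : Type*} [Group H] {a b : ℤ} (s t : H) (h : s ^ a * t ^ b = 1) : Gg a b →* H :=
  PresentedGroup.toGroup (f := ![s, t]) (by simpa [lift_xx, lift_yy] using h)

lemma IsSF.neg_right {g : FreeGroup (Fin 2)} {a b : ℤ} (hg : IsSF g a b) : IsSF g a (-b) := by
  obtain ⟨e⟩ := hg
  let A : Gg a b →* Gg a (-b) := Gg.lift (.of 0) (.of 1)⁻¹ <| by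
    rw [inv_zpow', Gg.of_zero_zpow_mul_of_one_zpow]
  let B : Gg a (-b) →* Gg a b := Gg.lift (.of 0) (.of 1)⁻¹ <| by
    rw [inv_zpow', neg_neg, Gg.of_zero_zpow_mul_of_one_zpow]
  have hBA : B.comp A = MonoidHom.id _ :=
    PresentedGroup.ext <| Fin.forall_fin_two.2 ⟨by simp [A, B, Gg.lift], by simp [A, B, Gg.lift]⟩
  have hAB : A.comp B = MonoidHom.id _ :=
    PresentedGroup.ext <| Fin.forall_fin_two.2 ⟨by simp [A, B, Gg.lift], by simp [A, B, Gg.lift]⟩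
  exact ⟨e.trans (A.toMulEquiv B hBA hAB)⟩

theorem isSF_powX_neg_coordY (φ : FreeGroup (Fin 2) ≃* FreeGroup (Fin 2)) (m : ℤ) :
    IsSF (powX m (φ xx)) m (-(coordY φ xx).toAdd) := by
  let a := (coordY φ xx).toAdd
  let b := (coordY φ yy).toAdd
  let Q := PresentedGroup {powX m (φ xx)}
  let π : FreeGroup (Fin 2) →* Q := PresentedGroup.mk _
  let t : Q := π (powX m (φ yy))
  have hπ (g) : π (powX m g) = t ^ (coordY φ g).toAdd :=
    apply_eq_zpow_coordY_of_map_xx_eq_one φ (f := π.comp (powX m)) (PresentedGroup.one_of_mem rfl) g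
  have hπx : π xx ^ m = t ^ a := by rw [← hπ, powX_xx, map_zpow]
  have hπy : π yy = t ^ b := by rw [← hπ, powX_yy]
  let x : Gg m (-a) := PresentedGroup.of 0
  let y : Gg m (-a) := PresentedGroup.of 1
  have hxy : x ^ m = y ^ a := by
    rw [← mul_inv_eq_one, ← zpow_neg, Gg.of_zero_zpow_mul_of_one_zpow]
  have hlift := lift_powX_eq_zpow_coordY φ hxy
  let A : Q →* Gg m (-a) := PresentedGroup.toGroup (f := ![x, y ^ b]) <| by
    simp [b, hlift, coordY_map_xx]
  let B : Gg m (-a) →* Q := Gg.lift (π xx) t <| by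
    rw [hπx, zpow_neg, mul_inv_cancel]
  have hAx : A (π xx) = x := lift_xx _
  have hAy : A (π yy) = y ^ b := lift_yy _
  have hAt : A t = y := (hlift (φ yy)).trans (by simp [coordY_map_yy])
  have hBx : B x = π xx := lift_xx _
  have hBy : B y = t := lift_yy _
  have hBA : B.comp A = MonoidHom.id Q := PresentedGroup.ext <| Fin.forall_fin_two.2
    ⟨show B (A (π xx)) = π xx by rw [hAx, hBx],
      show B (A (π yy)) = π yy by rw [hAy, map_zpow, hBy, hπy]⟩
  have hAB : A.comp B = MonoidHom.id (Gg m (-a)) := PresentedGroup.ext <| Fin.forall_fin_two.2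
    ⟨show A (B x) = x by rw [hBx, hAx], show A (B y) = y by rw [hBy, hAt]⟩
  exact ⟨A.toMulEquiv B hBA hAB⟩

theorem stmt6_general {g : FreeGroup (Fin 2)} (hg : IsPrimitive g) (m : ℤ) :
    IsSF (powX m g) m (exponentSum 1 g).toAdd := by
  obtain ⟨φ, rfl⟩ := hg
  have hSF := isSF_powX_neg_coordY φ m
  rcases Int.associated_iff.1 (associated_exponentSum_coordY φ) with h | h
  · simpa [h] using hSF.neg_right
  · simpa [h] using hSF

/-- If `w_{p,q,r,1}` is primitive then `w_{p,q,r,m}` is `(m,p)` Seifert-fibered: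
the quotient of the free group by the normal closure of `w_{p,q,r,m}` is
isomorphic to `G_{m,p} = ⟨x, y | x^m y^p⟩`. -/
theorem stmt6 (p q r : ℕ) (m : ℤ) (hp : 1 ≤ p) (hq : 1 ≤ q)
    (hpq : Nat.Coprime p q) (hr : 1 ≤ r) (hm : 1 ≤ m)
    (hprim : IsPrimitive (w p q r 1)) :
    IsSF (w p q r m) m (p : ℤ) := by
  simpa only [powX_w, exponentSum_one_w, toAdd_ofAdd] using stmt6_general hprim m
end

section
/- Let p and q be coprime integers with 1 ≤ q < p/2, let s = q̂⁻¹, and let r be an integer with 1 ≤ r ≤ ⌈p/s⌉ and p ≠ rs. Then w_{p,q,r,1} and w_{p,q,p−r,1} are both (r, p − r·s) Seifert-fibered; that is, the quotient of F by the normal closure of either element is isomorphic to G_{r, p−rs} = ⟨x, y | x^r y^{p−rs}⟩. -/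
/-!
Let `s q ≡ ε` with `ε = ±1` modulo `p`. Stepping `j ↦ j + s` moves `j q mod p` by `ε`, so the `j`
with `j q mod p` in an interval of length `r` form, up to a cyclic shift, the progression
`0, s, …, (r - 1) s`. A cyclic word of length `p` in a basis `u, v` of the free group, with `u`
exactly at these places, is conjugate to `(u v^(s-1))^r v^(p-rs)`, and `u v^(s-1), v` is again a
basis. The words `w_{p,q,r,1}` and `w_{p,q,p-r,1}` are of this kind: in the first `u = x y` occurs
where `j q mod p` lies in `[0, r)` and `v = y`, in the second `u = y` occurs where it lies in
`[p - r, p)` and `v = x y`. Likewise `w_{p,q,r+np,m}` is a word in `x^(m(n+1)) y` and `x^(mn) y`,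
and these form a basis when `m = ±1`.
-/

section FreeBasis

@[simp]
lemma lift_xx_s8 {G : Type*} [Group G] (u v : G) : FreeGroup.lift ![u, v] xx = u := by
  simp [xx]

@[simp]
lemma lift_yy_s8 {G : Type*} [Group G] (u v : G) : FreeGroup.lift ![u, v] yy = v := by
  simp [yy]

/-- `u, v` is a basis of the free group of rank two, encoded as the image of the standard basis
under an automorphism. -/
def IsFreeBasis (u v : FreeGroup (Fin 2)) : Prop :=
  ∃ φ : FreeGroup (Fin 2) ≃* FreeGroup (Fin 2), φ xx = u ∧ φ yy = v

variable {u v : FreeGroup (Fin 2)}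

lemma isFreeBasis_of_lift_eq (u' v' : FreeGroup (Fin 2))
    (hu : FreeGroup.lift ![u', v'] u = xx) (hv : FreeGroup.lift ![u', v'] v = yy)
    (hu' : FreeGroup.lift ![u, v] u' = xx) (hv' : FreeGroup.lift ![u, v] v' = yy) :
    IsFreeBasis u v :=
  ⟨MonoidHom.toMulEquiv (FreeGroup.lift ![u, v]) (FreeGroup.lift ![u', v'])
    (by ext i; fin_cases i <;> simp [hu, hv, xx, yy])
    (by ext i; fin_cases i <;> simp [hu', hv', xx, yy]), lift_xx_s8 u v, lift_yy_s8 u v⟩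

namespace IsFreeBasis

lemma standard : IsFreeBasis xx yy :=
  ⟨MulEquiv.refl _, rfl, rfl⟩

lemma map (h : IsFreeBasis u v) (ψ : FreeGroup (Fin 2) ≃* FreeGroup (Fin 2)) :
    IsFreeBasis (ψ u) (ψ v) := by
  obtain ⟨φ, rfl, rfl⟩ := h
  exact ⟨φ.trans ψ, rfl, rfl⟩

lemma swap (h : IsFreeBasis u v) : IsFreeBasis v u := by
  obtain ⟨φ, rfl, rfl⟩ := h
  exact (isFreeBasis_of_lift_eq yy xx (by simp) (by simp) (by simp) (by simp)).map φ

lemma zpow_left (h : IsFreeBasis u v) {m : ℤ} (hm : IsUnit m) : IsFreeBasis (u ^ m) v := by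
  obtain ⟨φ, rfl, rfl⟩ := h
  have hmm : (xx ^ m) ^ m = xx := by rw [← zpow_mul, Int.isUnit_mul_self hm, zpow_one]
  simpa using (isFreeBasis_of_lift_eq (u := xx ^ m) (v := yy) (xx ^ m) yy
    (by simp [hmm]) (by simp) (by simp [hmm]) (by simp)).map φ

lemma mul_zpow_left (h : IsFreeBasis u v) (n : ℤ) : IsFreeBasis (u * v ^ n) v := by
  obtain ⟨φ, rfl, rfl⟩ := h
  simpa using (isFreeBasis_of_lift_eq (u := xx * yy ^ n) (v := yy) (xx * (yy ^ n)⁻¹) yy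
    (by simp) (by simp) (by simp) (by simp)).map φ

lemma zpow_mul_right (h : IsFreeBasis u v) (n : ℤ) : IsFreeBasis u (u ^ n * v) := by
  obtain ⟨φ, rfl, rfl⟩ := h
  simpa using (isFreeBasis_of_lift_eq (u := xx) (v := xx ^ n * yy) xx ((xx ^ n)⁻¹ * yy)
    (by simp) (by simp) (by simp) (by simp)).map φ

lemma zpow_mul_pair (h : IsFreeBasis u v) {m : ℤ} (hm : IsUnit m) (n : ℤ) :
    IsFreeBasis (u ^ (m * (n + 1)) * v) (u ^ (m * n) * v) := by
  convert ((h.zpow_left hm).zpow_mul_right n).mul_zpow_left 1 using 1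
  · rw [zpow_one, ← mul_assoc, ← zpow_mul, ← zpow_add, mul_add_one, add_comm]
  · rw [← zpow_mul]

end IsFreeBasis

end FreeBasis

section SeifertFibered

variable {g h : FreeGroup (Fin 2)} {a b : ℤ}

lemma IsSF.map (hg : IsSF g a b) (φ : FreeGroup (Fin 2) ≃* FreeGroup (Fin 2)) :
    IsSF (φ g) a b := by
  obtain ⟨e⟩ := hg
  refine ⟨(QuotientGroup.congr _ _ φ ?_).symm.trans e⟩
  rw [Subgroup.map_normalClosure _ _ φ.surjective]
  simp

lemma IsSF.of_isConj (hg : IsSF g a b) (hgh : IsConj g h) : IsSF h a b := by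
  obtain ⟨c, rfl⟩ := isConj_iff.1 hgh
  exact hg.map (MulAut.conj c)

lemma IsFreeBasis.isSF_zpow_mul_zpow {u v : FreeGroup (Fin 2)} (huv : IsFreeBasis u v)
    (a b : ℤ) : IsSF (u ^ a * v ^ b) a b := by
  obtain ⟨φ, rfl, rfl⟩ := huv
  have hxy : IsSF (xx ^ a * yy ^ b) a b := ⟨MulEquiv.refl _⟩
  simpa using hxy.map φ

end SeifertFibered

section RangeProducts

lemma isConj_prod_range_of_periodic {G : Type*} [Group G] {f : ℕ → G} {p : ℕ}
    (hf : f.Periodic p) (c : ℕ) :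
    IsConj ((List.range p).map fun j => f (j + c)).prod ((List.range p).map f).prod := by
  induction c with
  | zero => exact IsConj.refl _
  | succ c ih =>
    refine IsConj.trans (isConj_iff.2 ⟨f c, ?_⟩) ih
    have hhead := List.prod_range_succ' (fun j => f (j + c)) p
    have hlast := List.prod_range_succ (fun j => f (j + c)) p
    have hperiod : f (p + c) = f c := by rw [add_comm, hf]
    rw [hlast, hperiod, zero_add] at hhead
    rw [mul_inv_eq_iff_eq_mul, hhead]
    simp only [Nat.succ_eq_add_one, add_right_comm _ 1 c, ← add_assoc]

lemma prod_range_add {M : Type*} [Monoid M] (f : ℕ → M) (m n : ℕ) :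
    ((List.range (m + n)).map f).prod =
      ((List.range m).map f).prod * ((List.range n).map fun j => f (j + m)).prod := by
  simp only [List.range_add, List.map_append, List.prod_append, List.map_map, Function.comp_def,
    add_comm]

variable {G : Type*} [Group G] {u v : G}

lemma prod_range_eq_mul_zpow {f : ℕ → G} {n : ℕ} (hn : 0 < n) (h0 : f 0 = u)
    (hv : ∀ j < n, j ≠ 0 → f j = v) :
    ((List.range n).map f).prod = u * v ^ ((n : ℤ) - 1) := by
  obtain ⟨k, rfl⟩ := Nat.exists_eq_add_one.2 hn
  have htail : ((List.range k).map fun j => f (j + 1)).prod = v ^ k := by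
    rw [List.prod_eq_pow_card _ v, List.length_map, List.length_range]
    simp only [List.forall_mem_map, List.mem_range]
    exact fun j hj => hv _ (by omega) (by omega)
  rw [List.prod_range_succ', h0, htail]
  simp

lemma prod_range_eq_of_progression {s : ℕ} (hs : 0 < s) (r : ℕ) {p : ℕ} {f : ℕ → G}
    (hrp : ∀ i < r, i * s < p) (hu : ∀ i < r, f (i * s) = u)
    (hv : ∀ j < p, (∀ i < r, j ≠ i * s) → f j = v) :
    ((List.range p).map f).prod =
      (u * v ^ ((s : ℤ) - 1)) ^ r * v ^ ((p : ℤ) - r * s) := by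
  induction r generalizing p f with
  | zero =>
    rw [List.prod_eq_pow_card _ v]
    · simp
    · simpa using hv
  | succ r ih =>
    have h0 : f 0 = u := by simpa using hu 0 r.succ_pos
    have hblock {j : ℕ} (hjp : j < p) (hjs : j < s) (hj : j ≠ 0) : f j = v := by
      refine hv j hjp ?_
      rintro (_ | i) -
      · simpa using hj
      · nlinarith
    rcases le_or_gt s p with hsp | hps
    · obtain ⟨p', rfl⟩ := Nat.exists_eq_add_of_le hsp
      have hrest := ih (p := p') (f := fun j => f (j + s))
        (fun i hi => by linarith [hrp (i + 1) (by omega), add_one_mul i s])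
        (fun i hi => by simpa only [add_one_mul] using hu (i + 1) (by omega))
        (fun j hj hne => by
          refine hv _ (by omega) ?_
          rintro (_ | i) hi
          · omega
          · simpa only [add_one_mul, ne_eq, Nat.add_right_cancel_iff] using hne i (by omega))
      rw [prod_range_add, hrest,
        prod_range_eq_mul_zpow hs h0 (fun j hj => hblock (by omega) hj), ← mul_assoc, ← pow_succ']
      congr 2
      push_cast
      ring
    · obtain rfl : r = 0 := by
        by_contra hr
        linarith [hrp 1 (by omega)]
      rw [prod_range_eq_mul_zpow (by simpa using hrp 0 one_pos) h0
        (fun j hj => hblock hj (by omega)), zero_add, pow_one, mul_assoc, ← zpow_add]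
      congr 2
      push_cast
      ring

end RangeProducts

section IntervalWord

lemma mod_mem_Ico_iff {p a r : ℕ} (har : a + r ≤ p) (n : ℕ) :
    n % p ∈ Finset.Ico a (a + r) ↔ ∃ i < r, (n : ZMod p) = a + i := by
  simp only [Finset.mem_Ico, ← Nat.cast_add, ZMod.natCast_eq_natCast_iff']
  constructor
  · rintro ⟨hle, hlt⟩
    refine ⟨n % p - a, by omega, ?_⟩
    rw [Nat.add_sub_cancel' hle, Nat.mod_mod]
  · rintro ⟨i, hi, hn⟩
    rw [Nat.mod_eq_of_lt (show a + i < p by omega)] at hn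
    omega

lemma exists_add_natCast_iff_exists_add_mul {R : Type*} [Ring R] {ε : R} (hε : ε = 1 ∨ ε = -1)
    (a : R) (r : ℕ) :
    ∃ t : R, ∀ x : R, (∃ i < r, x = a + (i : ℕ)) ↔ ∃ i < r, x = t + ε * (i : ℕ) := by
  rcases hε with rfl | rfl
  · exact ⟨a, by simp⟩
  · have hreflect {i : ℕ} (hi : i < r) : ((r - 1 - i : ℕ) : R) = r - 1 - i := by
      rw [Nat.cast_sub (by omega), Nat.cast_sub (by omega), Nat.cast_one]
    refine ⟨a + r - 1, fun x => ⟨?_, ?_⟩⟩ <;> rintro ⟨i, hi, rfl⟩ <;>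
      refine ⟨r - 1 - i, by omega, ?_⟩ <;> rw [hreflect hi] <;> noncomm_ring

lemma exists_shift_mod_mem_Ico_iff {p q s r a : ℕ}
    (hsq : (s * q : ZMod p) = 1 ∨ (s * q : ZMod p) = -1) (hrp : ∀ i < r, i * s < p)
    (har : a + r ≤ p) :
    ∃ c : ℕ, ∀ j < p, (j + c) * q % p ∈ Finset.Ico a (a + r) ↔ ∃ i < r, j = i * s := by
  rcases p.eq_zero_or_pos with rfl | hp
  · simp
  have : NeZero p := ⟨hp.ne'⟩
  obtain ⟨t, ht⟩ := exists_add_natCast_iff_exists_add_mul hsq (a : ZMod p) r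
  have hε : (s * q : ZMod p) * (s * q) = 1 := by rcases hsq with h | h <;> simp [h]
  obtain ⟨c, hc⟩ := ZMod.natCast_zmod_surjective (s * q * s * t : ZMod p)
  refine ⟨c, fun j hj => ?_⟩
  have hcq : (c * q : ZMod p) = t := by linear_combination (q : ZMod p) * hc + t * hε
  rw [mod_mem_Ico_iff har, ht]
  refine exists_congr fun i => and_congr_right fun hi => ?_
  calc (((j + c) * q : ℕ) : ZMod p) = t + s * q * i
      ↔ (j * q : ZMod p) = i * s * q := by
        push_cast
        constructor <;> intro h
        · linear_combination h - hcq
        · linear_combination h + hcq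
    _ ↔ (j : ZMod p) = (i * s : ℕ) := by
        push_cast
        constructor <;> intro h
        · linear_combination (s * q * s : ZMod p) * h + (i * s - j : ZMod p) * hε
        · rw [h]
    _ ↔ j = i * s := by
        rw [ZMod.natCast_eq_natCast_iff', Nat.mod_eq_of_lt hj, Nat.mod_eq_of_lt (hrp i hi)]

/-- The word of length `p` in `u` and `v` whose `j`-th letter, `0 ≤ j < p`, is `u` exactly when
`j q mod p` lies in the interval `[a, a + r)`. It expresses both families of words of the theorem
in the same form. -/
def intervalWord {M : Type*} [Monoid M] (u v : M) (p q a r : ℕ) : M :=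
  ((List.range p).map fun j => if j * q % p ∈ Finset.Ico a (a + r) then u else v).prod

lemma isConj_intervalWord {G : Type*} [Group G] (u v : G) {p q s r a : ℕ} (hs : 0 < s)
    (hsq : (s * q : ZMod p) = 1 ∨ (s * q : ZMod p) = -1) (hrp : ∀ i < r, i * s < p)
    (har : a + r ≤ p) :
    IsConj ((u * v ^ ((s : ℤ) - 1)) ^ r * v ^ ((p : ℤ) - r * s)) (intervalWord u v p q a r) := by
  set f : ℕ → G := fun j => if j * q % p ∈ Finset.Ico a (a + r) then u else v with hf
  have hperiodic : f.Periodic p := fun j => by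
    simp only [hf, add_mul, Nat.add_mul_mod_self_left]
  obtain ⟨c, hc⟩ := exists_shift_mod_mem_Ico_iff hsq hrp har
  rw [← prod_range_eq_of_progression (f := fun j => f (j + c)) hs r hrp
    (fun i hi => if_pos ((hc _ (hrp i hi)).2 ⟨i, hi, rfl⟩))
    (fun j hj hne => if_neg fun hmem => by
      obtain ⟨i, hi, hji⟩ := (hc j hj).1 hmem
      exact hne i hi hji)]
  exact isConj_prod_range_of_periodic hperiodic c

lemma IsFreeBasis.isSF_intervalWord {u v : FreeGroup (Fin 2)} (huv : IsFreeBasis u v)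
    {p q s r a : ℕ} (hs : 0 < s) (hsq : (s * q : ZMod p) = 1 ∨ (s * q : ZMod p) = -1)
    (hrp : ∀ i < r, i * s < p) (har : a + r ≤ p) :
    IsSF (intervalWord u v p q a r) r ((p : ℤ) - r * s) := by
  refine IsSF.of_isConj ?_ (isConj_intervalWord u v hs hsq hrp har)
  rw [← zpow_natCast]
  exact (huv.mul_zpow_left _).isSF_zpow_mul_zpow _ _

end IntervalWord

section TwistedTorusWords

lemma twist_exponent_add_mul {p r k : ℕ} (hk : k < p) (hr : r ≤ p) (n : ℕ) :
    (if k < (r + n * p) % p then (r + n * p) / p + 1 else (r + n * p) / p) =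
      if k < r then n + 1 else n := by
  have hp : 0 < p := by omega
  rw [Nat.add_mul_mod_self_right, Nat.add_mul_div_right _ _ hp]
  rcases hr.lt_or_eq with hlt | rfl
  · rw [Nat.mod_eq_of_lt hlt, Nat.div_eq_of_lt hlt, zero_add]
  · rw [Nat.mod_self, Nat.div_self hp, if_neg (Nat.not_lt_zero k), if_pos hk, add_comm]

lemma w_add_mul {p r : ℕ} (hr : r ≤ p) (q n : ℕ) (m : ℤ) :
    w p q (r + n * p) m =
      ((List.range p).map fun j =>
        if j * q % p < r then xx ^ (m * (n + 1)) * yy else xx ^ (m * n) * yy).prod := by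
  refine congrArg List.prod (List.map_congr_left fun j hj => ?_)
  have hjp : j * q % p < p := Nat.mod_lt _ (Nat.zero_lt_of_lt (List.mem_range.1 hj))
  rw [twist_exponent_add_mul hjp hr]
  split_ifs <;> push_cast <;> rfl

lemma w_add_mul_eq_intervalWord {p r : ℕ} (hr : r ≤ p) (q n : ℕ) (m : ℤ) :
    w p q (r + n * p) m =
      intervalWord (xx ^ (m * (n + 1)) * yy) (xx ^ (m * n) * yy) p q 0 r := by
  simp [w_add_mul hr, intervalWord]

lemma w_sub_add_mul_eq_intervalWord {p r : ℕ} (hr : r ≤ p) (q n : ℕ) (m : ℤ) :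
    w p q (p - r + n * p) m =
      intervalWord (xx ^ (m * n) * yy) (xx ^ (m * (n + 1)) * yy) p q (p - r) r := by
  rw [w_add_mul (p.sub_le r), intervalWord]
  refine congrArg List.prod (List.map_congr_left fun j hj => ?_)
  have hjp : j * q % p < p := Nat.mod_lt _ (Nat.zero_lt_of_lt (List.mem_range.1 hj))
  rw [← ite_not]
  simp [Nat.sub_add_cancel hr, hjp]

end TwistedTorusWords

lemma mul_lt_of_le_ceil_div {p s r : ℕ} (hs : 0 < s) (hr : (r : ℤ) ≤ ⌈(p : ℚ) / (s : ℚ)⌉)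
    {i : ℕ} (hi : i < r) : i * s < p := by
  have hlt : (i : ℤ) < ⌈(p : ℚ) / (s : ℚ)⌉ := by omega
  rw [Int.lt_ceil, lt_div_iff₀ (by exact_mod_cast hs)] at hlt
  exact_mod_cast hlt

theorem stmt8_general (p q s r n : ℕ) {m : ℤ} (hm : IsUnit m) (hs : 0 < s)
    (hsq : (s * q : ℤ) ≡ 1 [ZMOD (p : ℤ)] ∨ (s * q : ℤ) ≡ -1 [ZMOD (p : ℤ)])
    (hr : (r : ℤ) ≤ ⌈(p : ℚ) / (s : ℚ)⌉) :
    IsSF (w p q (r + n * p) m) (r : ℤ) ((p : ℤ) - r * s) ∧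
    IsSF (w p q (p - r + n * p) m) (r : ℤ) ((p : ℤ) - r * s) := by
  have hsq' : (s * q : ZMod p) = 1 ∨ (s * q : ZMod p) = -1 := by
    simpa [← ZMod.intCast_eq_intCast_iff] using hsq
  have hrp : ∀ i < r, i * s < p := fun i hi => mul_lt_of_le_ceil_div hs hr hi
  have hle : r ≤ p :=
    le_of_forall_lt fun i hi => (Nat.le_mul_of_pos_right i hs).trans_lt (hrp i hi)
  have hbasis := IsFreeBasis.standard.zpow_mul_pair hm n
  rw [w_add_mul_eq_intervalWord hle, w_sub_add_mul_eq_intervalWord hle]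
  exact ⟨hbasis.isSF_intervalWord hs hsq' hrp (by omega),
    hbasis.swap.isSF_intervalWord hs hsq' hrp (by omega)⟩

/-- Let `s = q̂⁻¹` be the smallest positive integer with `s q ≡ ±1 (mod p)`.
For `1 ≤ r ≤ ⌈p/s⌉` with `p ≠ r s`, both `w_{p,q,r,1}` and `w_{p,q,p-r,1}`
are `(r, p - r s)` Seifert-fibered. -/
theorem stmt8 (p q s r : ℕ) (hpq : Nat.Coprime p q)
    (hq1 : 1 ≤ q) (hq2 : 2 * q < p)
    (hs1 : 0 < s)
    (hs2 : (s * q : ℤ) ≡ 1 [ZMOD (p : ℤ)] ∨ (s * q : ℤ) ≡ -1 [ZMOD (p : ℤ)])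
    (hs3 : ∀ t : ℕ, 0 < t →
      ((t * q : ℤ) ≡ 1 [ZMOD (p : ℤ)] ∨ (t * q : ℤ) ≡ -1 [ZMOD (p : ℤ)]) → s ≤ t)
    (hr1 : 1 ≤ r) (hr2 : (r : ℤ) ≤ ⌈(p : ℚ) / (s : ℚ)⌉) (hrs : p ≠ r * s) :
    IsSF (w p q r 1) (r : ℤ) ((p : ℤ) - r * s) ∧
    IsSF (w p q (p - r) 1) (r : ℤ) ((p : ℤ) - r * s) := by
  simpa using stmt8_general p q s r 0 isUnit_one hs1 hs2 hr2
end

section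
/- Let p and q be coprime integers with 1 ≤ q < p/2, let s = q̂⁻¹, and let r be an integer with 1 ≤ r ≤ ⌈p/s⌉. Then there is an automorphism of the free group F mapping w_{p,q,r,1} to x^r y^{p−rs}. -/
/-!
With `r = k + 1`, the factor `x` occurs in `w_{p,q,r,1}` exactly at the positions `j` that are
congruent modulo `p` to `i q⁻¹` for some `0 ≤ i ≤ k`. Here `q⁻¹ = ±s`, and `k s < p` says that
these multiples do not wrap around, so `w_{p,q,r,1}` is `(x y^s)^k (x y^n)` or `(x y^n) (x y^s)^k`
with `n = p - k s`. The automorphism `x ↦ x y^{-s}`, `y ↦ y` turns these into `x^{k+1} y^{n-s}` and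
its conjugate `x y^{n-s} x^k`.
-/

section BlockProducts

variable {M : Type*} [Monoid M]

lemma prod_map_range_add (f : ℕ → M) (m n : ℕ) :
    ((List.range (m + n)).map f).prod =
      ((List.range m).map f).prod * ((List.range n).map fun j => f (m + j)).prod := by
  simp only [List.range_add, List.map_append, List.map_map, List.prod_append, Function.comp_def]

lemma prod_map_range_congr {f g : ℕ → M} {n : ℕ} (h : ∀ j < n, f j = g j) :
    ((List.range n).map f).prod = ((List.range n).map g).prod := by
  rw [List.map_congr_left fun j hj => h j (List.mem_range.mp hj)]

lemma prod_map_range_ite_eq_zero (x y : M) {n : ℕ} (hn : 0 < n) :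
    ((List.range n).map fun j => (if j = 0 then x else 1) * y).prod = x * y ^ n := by
  obtain ⟨n, rfl⟩ := Nat.exists_eq_add_of_lt hn
  simp [List.prod_range_succ', pow_succ', mul_assoc]

lemma prod_map_range_ite_dvd (x y : M) {s : ℕ} (hs : 0 < s) (k : ℕ) :
    ((List.range (k * s)).map fun j => (if s ∣ j then x else 1) * y).prod = (x * y ^ s) ^ k := by
  induction k with
  | zero => simp
  | succ k ih =>
    have dvd_shift_iff : ∀ j < s, s ∣ k * s + j ↔ j = 0 := fun j hj => by
      rw [Nat.dvd_add_right (Nat.dvd_mul_left s k)]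
      exact ⟨fun h => Nat.eq_zero_of_dvd_of_lt h hj, fun h => h ▸ dvd_zero s⟩
    rw [Nat.succ_mul, prod_map_range_add, ih, pow_succ, ← prod_map_range_ite_eq_zero x y hs]
    congr 1
    exact prod_map_range_congr fun j hj => by simp only [dvd_shift_iff j hj]

end BlockProducts

section Positions

variable {p q s k j : ℕ}

lemma mul_mod_lt_iff_exists_modEq {r : ℕ} {t : ℤ} (ht : t * q ≡ 1 [ZMOD p]) :
    j * q % p < r ↔ ∃ i < r, (j : ℤ) ≡ i * t [ZMOD p] := by
  constructor
  · refine fun h => ⟨j * q % p, h, ?_⟩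
    calc (j : ℤ) = j * 1 := (mul_one _).symm
      _ ≡ j * (t * q) [ZMOD p] := ht.symm.mul_left _
      _ = (j * q : ℕ) * t := by push_cast; ring
      _ ≡ (j * q % p : ℕ) * t [ZMOD p] :=
        (Int.natCast_modEq_iff.mpr (Nat.mod_modEq _ _).symm).mul_right _
  · rintro ⟨i, hi, hji⟩
    have hjq : j * q ≡ i [MOD p] := by
      rw [← Int.natCast_modEq_iff]
      calc ((j * q : ℕ) : ℤ) = j * q := Nat.cast_mul j q
        _ ≡ i * t * q [ZMOD p] := hji.mul_right _
        _ = i * (t * q) := mul_assoc _ _ _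
        _ ≡ i * 1 [ZMOD p] := ht.mul_left _
        _ = i := mul_one _
    exact (hjq.symm ▸ Nat.mod_le i p).trans_lt hi

lemma mul_mod_lt_succ_iff_of_mul_modEq_one (hs : (s * q : ℤ) ≡ 1 [ZMOD (p : ℤ)])
    (hk : k * s < p) (hj : j < p) : j * q % p < k + 1 ↔ ∃ i ≤ k, j = i * s := by
  simp only [mul_mod_lt_iff_exists_modEq hs, Nat.lt_succ_iff]
  refine exists_congr fun i => and_congr_right fun hi => ?_
  have his : i * s < p := (Nat.mul_le_mul_right s hi).trans_lt hk
  rw [← Nat.cast_mul, Int.natCast_modEq_iff]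
  exact ⟨fun h => h.eq_of_lt_of_lt hj his, fun h => h ▸ Nat.ModEq.rfl⟩

lemma mul_mod_lt_succ_iff_of_mul_modEq_neg_one (hs : (s * q : ℤ) ≡ -1 [ZMOD (p : ℤ)])
    (hk : k * s < p) (hj : j < p) :
    j * q % p < k + 1 ↔ j = 0 ∨ ∃ i ≤ k, j + i * s = p := by
  have neg_s_mul_q : -(s : ℤ) * q ≡ 1 [ZMOD p] := by simpa using hs.neg
  have modEq_iff_dvd (i : ℕ) : (j : ℤ) ≡ i * -(s : ℤ) [ZMOD p] ↔ p ∣ j + i * s := by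
    rw [Int.modEq_comm, Int.modEq_iff_dvd, ← Int.natCast_dvd_natCast]
    push_cast
    ring_nf
  simp only [mul_mod_lt_iff_exists_modEq neg_s_mul_q, Nat.lt_succ_iff, modEq_iff_dvd]
  constructor
  · rintro ⟨i, hi, c, hc⟩
    have his : i * s < p := (Nat.mul_le_mul_right s hi).trans_lt hk
    have hc2 : c < 2 := Nat.lt_of_mul_lt_mul_left (a := p) (by lia)
    interval_cases c
    · exact .inl (by lia)
    · exact .inr ⟨i, hi, by lia⟩
  · rintro (rfl | ⟨i, hi, hji⟩)
    · exact ⟨0, k.zero_le, by simp⟩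
    · exact ⟨i, hi, hji ▸ dvd_rfl⟩

end Positions

section Words

lemma w_eq_prod_ite {p r : ℕ} (q : ℕ) (m : ℤ) (hr : r ≤ p) :
    w p q r m =
      ((List.range p).map fun j => (if j * q % p < r then xx ^ m else 1) * yy).prod := by
  refine prod_map_range_congr fun j hj => ?_
  have hp : 0 < p := j.zero_le.trans_lt hj
  rcases hr.lt_or_eq with h | rfl
  · rw [Nat.mod_eq_of_lt h, Nat.div_eq_of_lt h]
    split_ifs <;> simp
  · simp [Nat.div_self hp, Nat.mod_lt _ hp]

variable {q s k n : ℕ}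

lemma w_of_mul_modEq_one (hs0 : 0 < s) (hn : 0 < n)
    (hs : (s * q : ℤ) ≡ 1 [ZMOD ((k * s + n : ℕ) : ℤ)]) (m : ℤ) :
    w (k * s + n) q (k + 1) m = (xx ^ m * yy ^ s) ^ k * (xx ^ m * yy ^ n) := by
  have hkp : k ≤ k * s := Nat.le_mul_of_pos_right k hs0
  have position_iff (j : ℕ) (hj : j < k * s + n) :=
    mul_mod_lt_succ_iff_of_mul_modEq_one hs (k := k) (by lia) hj
  have initial_iff : ∀ j < k * s, j * q % (k * s + n) < k + 1 ↔ s ∣ j := fun j hj => by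
    rw [position_iff j (by lia)]
    constructor
    · rintro ⟨i, -, rfl⟩
      exact Nat.dvd_mul_left s i
    · rintro ⟨i, rfl⟩
      exact ⟨i, Nat.le_of_mul_le_mul_left (hj.le.trans_eq (mul_comm k s)) hs0, mul_comm s i⟩
  have final_iff : ∀ j < n, (k * s + j) * q % (k * s + n) < k + 1 ↔ j = 0 := fun j hj => by
    rw [position_iff _ (by lia)]
    constructor
    · rintro ⟨i, hi, hji⟩
      have := Nat.mul_le_mul_right s hi
      lia
    · rintro rfl
      exact ⟨k, le_rfl, rfl⟩
  rw [w_eq_prod_ite q m (by lia), prod_map_range_add, ← prod_map_range_ite_dvd _ _ hs0,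
    ← prod_map_range_ite_eq_zero _ _ hn]
  congr 1
  · exact prod_map_range_congr fun j hj => by simp only [initial_iff j hj]
  · exact prod_map_range_congr fun j hj => by simp only [final_iff j hj]

lemma w_of_mul_modEq_neg_one (hs0 : 0 < s) (hn : 0 < n)
    (hs : (s * q : ℤ) ≡ -1 [ZMOD ((n + k * s : ℕ) : ℤ)]) (m : ℤ) :
    w (n + k * s) q (k + 1) m = xx ^ m * yy ^ n * (xx ^ m * yy ^ s) ^ k := by
  have hkp : k ≤ k * s := Nat.le_mul_of_pos_right k hs0
  have position_iff (j : ℕ) (hj : j < n + k * s) :=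
    mul_mod_lt_succ_iff_of_mul_modEq_neg_one hs (k := k) (by lia) hj
  have initial_iff : ∀ j < n, j * q % (n + k * s) < k + 1 ↔ j = 0 := fun j hj => by
    rw [position_iff j (by lia)]
    refine or_iff_left ?_
    rintro ⟨i, hi, hji⟩
    have := Nat.mul_le_mul_right s hi
    lia
  have final_iff : ∀ j < k * s, (n + j) * q % (n + k * s) < k + 1 ↔ s ∣ j := fun j hj => by
    rw [position_iff _ (by lia)]
    constructor
    · rintro (h | ⟨i, -, hji⟩)
      · lia
      · exact (Nat.dvd_add_left (Nat.dvd_mul_left s i)).mp ⟨k, by lia⟩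
    · rintro ⟨i, rfl⟩
      exact .inr ⟨k - i, k.sub_le i, by rw [Nat.sub_mul]; lia⟩
  rw [w_eq_prod_ite q m (by lia), prod_map_range_add, ← prod_map_range_ite_dvd _ _ hs0,
    ← prod_map_range_ite_eq_zero _ _ hn]
  congr 1
  · exact prod_map_range_congr fun j hj => by simp only [initial_iff j hj]
  · exact prod_map_range_congr fun j hj => by simp only [final_iff j hj]

end Words

/-- The automorphism `x ↦ x y ^ n`, `y ↦ y` of the free group, with inverse the shear by `-n`;
for `n = -s` it collapses a block `x y ^ s` to `x`. -/
def shear (n : ℤ) : FreeGroup (Fin 2) ≃* FreeGroup (Fin 2) :=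
  MonoidHom.toMulEquiv (FreeGroup.lift ![xx * yy ^ n, yy]) (FreeGroup.lift ![xx * yy ^ (-n), yy])
    (by ext i; fin_cases i <;> simp [xx, yy])
    (by ext i; fin_cases i <;> simp [xx, yy])

@[simp]
lemma shear_xx (n : ℤ) : shear n xx = xx * yy ^ n := by
  simp [shear, xx]

@[simp]
lemma shear_yy (n : ℤ) : shear n yy = yy := by
  simp [shear, yy]

lemma shear_neg_xx_mul_yy_pow (s n : ℕ) :
    shear (-s) (xx * yy ^ n) = xx * yy ^ ((n : ℤ) - s) := by
  rw [map_mul, map_pow, shear_xx, shear_yy, mul_assoc, ← zpow_natCast, ← zpow_add,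
    neg_add_eq_sub]

theorem stmt11_general (p q s r : ℕ) (hs1 : 0 < s)
    (hs2 : (s * q : ℤ) ≡ 1 [ZMOD (p : ℤ)] ∨ (s * q : ℤ) ≡ -1 [ZMOD (p : ℤ)])
    (hr1 : 1 ≤ r) (hr2 : (r : ℤ) ≤ ⌈(p : ℚ) / (s : ℚ)⌉) :
    ∃ φ : FreeGroup (Fin 2) ≃* FreeGroup (Fin 2),
      φ (w p q r 1) = xx ^ (r : ℤ) * yy ^ ((p : ℤ) - r * s) := by
  obtain ⟨k, rfl⟩ : ∃ k, r = k + 1 := ⟨r - 1, by lia⟩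
  have hk : k * s < p := by
    have : (k : ℤ) < ⌈(p : ℚ) / s⌉ := by lia
    rw [Int.lt_ceil, lt_div_iff₀ (by exact_mod_cast hs1)] at this
    exact_mod_cast this
  obtain ⟨n, hn, rfl⟩ : ∃ n, 0 < n ∧ p = k * s + n := ⟨p - k * s, by lia, by lia⟩
  have exponent_eq : ((k * s + n : ℕ) : ℤ) - (k + 1 : ℕ) * s = n - s := by push_cast; ring
  rw [exponent_eq, zpow_natCast, pow_succ, mul_assoc]
  rcases hs2 with hs | hs
  · refine ⟨shear (-s), ?_⟩
    rw [w_of_mul_modEq_one hs1 hn hs, zpow_one, map_mul, map_pow]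
    simp only [shear_neg_xx_mul_yy_pow, sub_self, zpow_zero, mul_one]
  · refine ⟨(shear (-s)).trans (MulAut.conj (xx ^ k)), ?_⟩
    rw [add_comm] at hs ⊢
    rw [w_of_mul_modEq_neg_one hs1 hn hs, zpow_one, MulEquiv.trans_apply, MulAut.conj_apply,
      map_mul, map_pow]
    simp only [shear_neg_xx_mul_yy_pow, sub_self, zpow_zero, mul_one, ← mul_assoc,
      mul_inv_cancel_right]

/-- For coprime `p, q` with `1 ≤ q < p/2`, `s = q̂⁻¹` the smallest positive
integer with `s q ≡ ±1 (mod p)`, and `1 ≤ r ≤ ⌈p/s⌉`, some automorphism of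
the free group maps `w_{p,q,r,1}` to `x^r y^{p - r s}`. -/
theorem stmt11 (p q s r : ℕ) (hpq : Nat.Coprime p q)
    (hq1 : 1 ≤ q) (hq2 : 2 * q < p)
    (hs1 : 0 < s)
    (hs2 : (s * q : ℤ) ≡ 1 [ZMOD (p : ℤ)] ∨ (s * q : ℤ) ≡ -1 [ZMOD (p : ℤ)])
    (hs3 : ∀ t : ℕ, 0 < t →
      ((t * q : ℤ) ≡ 1 [ZMOD (p : ℤ)] ∨ (t * q : ℤ) ≡ -1 [ZMOD (p : ℤ)]) → s ≤ t)
    (hr1 : 1 ≤ r) (hr2 : (r : ℤ) ≤ ⌈(p : ℚ) / (s : ℚ)⌉) :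
    ∃ φ : FreeGroup (Fin 2) ≃* FreeGroup (Fin 2),
      φ (w p q r 1) = xx ^ (r : ℤ) * yy ^ ((p : ℤ) - r * s) :=
  stmt11_general p q s r hs1 hs2 hr1 hr2
end

section
/- Let p and q be coprime integers with 1 ≤ q < p/2. Then there exist positive integers k_1, …, k_q such that ŵ_{p,q,q} = x y^{k_1} x y^{k_2} ⋯ x y^{k_q}, and for every integer β with 1 ≤ β and βq < p one has k_i + 1 − β ≥ 0 for each i and ŵ_{p,q,βq} = x^β y^{k_1+1−β} x^β y^{k_2+1−β} ⋯ x^β y^{k_q+1−β}. -/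
/-- The word `ŵ_{p,q,r} = ∏_{j=0}^{p-1} z_j` with `z_j = x` if `(j q mod p) < r`
and `z_j = y` otherwise (the image of `w_{p,q,r,1}` under the automorphism
fixing `y` and sending `x` to `x y⁻¹`). -/
def what (p q r : ℕ) : FreeGroup (Fin 2) :=
  ((List.range p).map (fun j => if j * q % p < r then xx else yy)).prod

/-!
The walk `0, q, 2q, …, (p - 1)q` goes `q` times around the circle of length `p`. Its `i`-th turn
consists of the indices `j` with `i p ≤ j q < (i + 1) p`; there `j q mod p = j q - i p` increases
in steps of `q` from a value below `q`, so it lies below `β q` for exactly the first `β` indices of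
the turn. Each turn therefore contributes `x ^ β y ^ (ℓ i - β)`, where the length `ℓ i` of the turn
does not depend on `β`, and `k i = ℓ i - 1`.
-/

section ConsecutiveIntervals

open List

lemma flatten_ofFn_Ico {c : ℕ → ℕ} (hc : Monotone c) (n : ℕ) :
    (ofFn fun i : Fin n => Ico (c i) (c (i + 1))).flatten = Ico (c 0) (c n) := by
  induction n with
  | zero => simp only [ofFn_zero, flatten_nil, Ico.self_empty]
  | succ n ih =>
    simp only [ofFn_succ_last, Fin.val_castSucc, Fin.val_last, flatten_append, flatten_singleton,
      ih]
    exact Ico.append_consecutive (hc n.zero_le) (hc n.le_succ)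

variable {M : Type*} [Monoid M]

lemma prod_map_Ico_eq_prod_ofFn (f : ℕ → M) {c : ℕ → ℕ} (hc : Monotone c) (n : ℕ) :
    ((Ico (c 0) (c n)).map f).prod =
      (ofFn fun i : Fin n => ((Ico (c i) (c (i + 1))).map f).prod).prod := by
  rw [← flatten_ofFn_Ico hc, map_flatten, prod_flatten, map_ofFn, map_ofFn]
  rfl

lemma prod_map_Ico_ite_lt (a b : M) {l m n : ℕ} (hlm : l ≤ m) (hmn : m ≤ n) :
    ((Ico l n).map fun j => if j < m then a else b).prod = a ^ (m - l) * b ^ (n - m) := by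
  have hleft : (Ico l m).map (fun j => if j < m then a else b) = replicate (m - l) a :=
    eq_replicate_iff.mpr ⟨by simp, by simp +contextual⟩
  have hright : (Ico m n).map (fun j => if j < m then a else b) = replicate (n - m) b :=
    eq_replicate_iff.mpr ⟨by simp, by grind [Ico.mem]⟩
  rw [← Ico.append_consecutive hlm hmn, map_append, prod_append, hleft, hright, prod_replicate,
    prod_replicate]

end ConsecutiveIntervals

/-- The least index `j` with `i * p ≤ j * q` (for `0 < q`). The indices `j` from `blockStart p q i`
up to, but excluding, `blockStart p q (i + 1)` form the `i`-th block: the part of the walk `j * q`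
that runs through `[i * p, (i + 1) * p)`. -/
def blockStart (p q i : ℕ) : ℕ := (i * p) ⌈/⌉ q

/-- The number of indices in the `i`-th block. -/
def blockLength (p q i : ℕ) : ℕ := blockStart p q (i + 1) - blockStart p q i

section Blocks

variable {p q : ℕ}

lemma blockStart_le_iff (hq : 0 < q) {i j : ℕ} : blockStart p q i ≤ j ↔ i * p ≤ j * q := by
  rw [blockStart, ceilDiv_le_iff_le_mul hq, mul_comm q]

lemma lt_blockStart_iff (hq : 0 < q) {i j : ℕ} : j < blockStart p q i ↔ j * q < i * p :=
  lt_iff_lt_of_le_iff_le (blockStart_le_iff hq)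

lemma blockStart_zero : blockStart p q 0 = 0 := by
  rw [blockStart, zero_mul, zero_ceilDiv]

lemma blockStart_self (hq : 0 < q) : blockStart p q q = p := smul_ceilDiv hq p

lemma blockStart_mono (hq : 0 < q) : Monotone (blockStart p q) := fun _ _ h =>
  (gc_mul_ceilDiv hq).monotone_l (Nat.mul_le_mul_right p h)

lemma lt_blockStart_add_iff (hq : 0 < q) {β i j : ℕ} :
    j < blockStart p q i + β ↔ j * q < i * p + β * q := by
  obtain hjβ | hβj := lt_or_ge j β
  · have : j * q < β * q := Nat.mul_lt_mul_of_pos_right hjβ hq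
    omega
  · obtain ⟨t, rfl⟩ := Nat.exists_eq_add_of_le' hβj
    rw [add_lt_add_iff_right, lt_blockStart_iff hq, add_mul, add_lt_add_iff_right]

lemma blockStart_add_le_blockStart_succ (hq : 0 < q) {β : ℕ} (hβ : β * q ≤ p) (i : ℕ) :
    blockStart p q i + β ≤ blockStart p q (i + 1) := by
  refine le_of_forall_lt fun j hj => (lt_blockStart_iff hq).mpr ?_
  calc j * q < i * p + β * q := (lt_blockStart_add_iff hq).mp hj
    _ ≤ i * p + p := Nat.add_le_add_left hβ _
    _ = (i + 1) * p := (Nat.succ_mul i p).symm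

lemma le_blockLength (hq : 0 < q) {β : ℕ} (hβ : β * q ≤ p) (i : ℕ) : β ≤ blockLength p q i :=
  Nat.le_sub_of_add_le' (blockStart_add_le_blockStart_succ hq hβ i)

lemma mul_mod_lt_iff_lt_blockStart_add (hq : 0 < q) {β i j : ℕ} (hij : blockStart p q i ≤ j)
    (hji : j < blockStart p q (i + 1)) : j * q % p < β * q ↔ j < blockStart p q i + β := by
  have hlower : i * p ≤ j * q := (blockStart_le_iff hq).mp hij
  have hupper : j * q < (i + 1) * p := (lt_blockStart_iff hq).mp hji
  have hmod : j * q % p = j * q - i * p := by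
    rw [← Nat.div_eq_of_lt_le hlower hupper, Nat.mod_eq_sub_div_mul]
  rw [hmod, lt_blockStart_add_iff hq, Nat.sub_lt_iff_lt_add hlower, add_comm]

variable {M : Type*} [Monoid M] (a b : M)

lemma prod_map_block_ite_mul_mod_lt (hq : 0 < q) {β : ℕ} (hβ : β * q ≤ p) (i : ℕ) :
    ((List.Ico (blockStart p q i) (blockStart p q (i + 1))).map
      fun j => if j * q % p < β * q then a else b).prod = a ^ β * b ^ (blockLength p q i - β) := by
  have hblock : ∀ j ∈ List.Ico (blockStart p q i) (blockStart p q (i + 1)),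
      (if j * q % p < β * q then a else b) = if j < blockStart p q i + β then a else b := by
    intro j hj
    obtain ⟨hij, hji⟩ := List.Ico.mem.mp hj
    simp only [mul_mod_lt_iff_lt_blockStart_add hq hij hji]
  rw [List.map_congr_left hblock, prod_map_Ico_ite_lt a b (Nat.le_add_right _ β)
    (blockStart_add_le_blockStart_succ hq hβ i), Nat.add_sub_cancel_left, blockLength, Nat.sub_sub]

lemma prod_map_range_ite_mul_mod_lt (hq : 0 < q) {β : ℕ} (hβ : β * q ≤ p) :
    ((List.range p).map fun j => if j * q % p < β * q then a else b).prod =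
      (List.ofFn fun i : Fin q => a ^ β * b ^ (blockLength p q i - β)).prod := by
  have hrange : List.range p = List.Ico (blockStart p q 0) (blockStart p q q) := by
    rw [blockStart_zero, blockStart_self hq, List.Ico.zero_bot]
  simp only [hrange, prod_map_Ico_eq_prod_ofFn _ (blockStart_mono hq),
    prod_map_block_ite_mul_mod_lt a b hq hβ]

end Blocks

theorem stmt12_general (p q : ℕ) (hq : 0 < q) (hqp : 2 * q ≤ p) :
    ∃ k : Fin q → ℕ, (∀ i, 0 < k i) ∧
      what p q q = (List.ofFn (fun i : Fin q => xx * yy ^ (k i))).prod ∧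
      ∀ β : ℕ, β * q ≤ p →
        (∀ i, (0 : ℤ) ≤ (k i : ℤ) + 1 - β) ∧
        what p q (β * q) =
          (List.ofFn (fun i : Fin q => xx ^ (β : ℤ) * yy ^ ((k i : ℤ) + 1 - β))).prod := by
  have hpos (i : Fin q) : 0 < blockLength p q i - 1 := Nat.sub_pos_of_lt (le_blockLength hq hqp i)
  have hcast (i : Fin q) : ((blockLength p q i - 1 : ℕ) : ℤ) + 1 = blockLength p q i := by
    have := hpos i
    omega
  refine ⟨fun i => blockLength p q i - 1, hpos, ?_, fun β hβ => ?_⟩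
  · simpa only [what, one_mul, pow_one] using
      prod_map_range_ite_mul_mod_lt xx yy hq (show 1 * q ≤ p by omega)
  · have hle (i : Fin q) : β ≤ blockLength p q i := le_blockLength hq hβ i
    simp only [hcast, ← Nat.cast_sub (hle _), zpow_natCast]
    exact ⟨fun i => Nat.cast_nonneg _, prod_map_range_ite_mul_mod_lt xx yy hq hβ⟩

/-- For coprime `p, q` with `1 ≤ q < p/2`, there are positive integers
`k_1, …, k_q` with `ŵ_{p,q,q} = x y^{k_1} ⋯ x y^{k_q}`, and for every `β ≥ 1`
with `β q < p` one has `k_i + 1 - β ≥ 0` for each `i` and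
`ŵ_{p,q,βq} = x^β y^{k_1+1-β} ⋯ x^β y^{k_q+1-β}`. -/
theorem stmt12 (p q : ℕ) (hpq : Nat.Coprime p q) (hq1 : 1 ≤ q) (hq2 : 2 * q < p) :
    ∃ k : Fin q → ℕ, (∀ i, 0 < k i) ∧
      what p q q = (List.ofFn (fun i : Fin q => xx * yy ^ (k i))).prod ∧
      ∀ β : ℕ, 1 ≤ β → β * q < p →
        (∀ i, (0 : ℤ) ≤ (k i : ℤ) + 1 - β) ∧
        what p q (β * q) =
          (List.ofFn (fun i : Fin q => xx ^ (β : ℤ) * yy ^ ((k i : ℤ) + 1 - β))).prod := by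
  obtain ⟨k, hpos, hword, hβ⟩ := stmt12_general p q hq1 hq2.le
  exact ⟨k, hpos, hword, fun β _ h => hβ β h.le⟩
end
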